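/- Let K = GF(q) be a finite field with q ≡ 3 (mod 4) and (V, f) a finite-dimensional nondegenerate symmetric bilinear space over K. Assume that either (1) dim V ≡ 0 (mod 4) and disc V = −1, or (2) dim V = 8 or dim V = 9. Then Ω(V) is bireflectional. -/

import Mathlib

open Polynomial Module

namespace Biref

variable {K V : Type*} [Field K] [AddCommGroup V] [Module K V]

/-- The orthogonal group of a bilinear form: all linear automorphisms preserving `f`. -/
def orthGroup (f : LinearMap.BilinForm K V) : Subgroup (V ≃ₗ[K] V) where
  carrier := {φ | ∀ x y : V, f (φ x) (φ y) = f x y}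
  one_mem' := fun _ _ => rfl
  mul_mem' := by
    intro a b ha hb x y
    simpa using (ha (b x) (b y)).trans (hb x y)
  inv_mem' := by
    intro a ha x y
    show f (a.symm x) (a.symm y) = f x y
    conv_rhs => rw [← a.apply_symm_apply x, ← a.apply_symm_apply y]
    exact (ha _ _).symm

/-- The special orthogonal group: isometries of determinant 1. -/
def specialOrthGroup (f : LinearMap.BilinForm K V) : Subgroup (V ≃ₗ[K] V) where
  carrier := {φ | (∀ x y : V, f (φ x) (φ y) = f x y) ∧
      LinearMap.det (φ : V →ₗ[K] V) = 1}
  one_mem' := ⟨fun _ _ => rfl, by simp⟩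
  mul_mem' := by
    rintro a b ⟨ha, ha'⟩ ⟨hb, hb'⟩
    refine ⟨fun x y => by simpa using (ha (b x) (b y)).trans (hb x y), ?_⟩
    rw [LinearEquiv.coe_toLinearMap_mul, map_mul, ha', hb', one_mul]
  inv_mem' := by
    rintro a ⟨ha, ha'⟩
    refine ⟨fun x y => ?_, ?_⟩
    · show f (a.symm x) (a.symm y) = f x y
      conv_rhs => rw [← a.apply_symm_apply x, ← a.apply_symm_apply y]
      exact (ha _ _).symm
    · have h1 : LinearMap.det ((a⁻¹ * a : V ≃ₗ[K] V) : V →ₗ[K] V) = 1 := by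
        rw [inv_mul_cancel, LinearEquiv.coe_toLinearMap_one, LinearMap.det_id]
      rw [LinearEquiv.coe_toLinearMap_mul, map_mul, ha', mul_one] at h1
      exact h1

/-- The commutator subgroup `Ω(V)` of the orthogonal group. -/
def omegaGroup (f : LinearMap.BilinForm K V) : Subgroup (V ≃ₗ[K] V) :=
  ⁅orthGroup f, orthGroup f⁆

/-- `g` is a product of two involutions lying in the subgroup `H`. -/
def IsBireflectionalIn {G : Type*} [Group G] (H : Subgroup G) (g : G) : Prop :=
  ∃ σ τ : G, σ ∈ H ∧ τ ∈ H ∧ σ ^ 2 = 1 ∧ τ ^ 2 = 1 ∧ g = σ * τ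

/-- `g` is bireflectional in the group `G`. -/
def IsBireflectional {G : Type*} [Group G] (g : G) : Prop :=
  ∃ σ τ : G, σ ^ 2 = 1 ∧ τ ^ 2 = 1 ∧ g = σ * τ

/-- `g` is reversed by some element of `H`. -/
def IsReversibleIn {G : Type*} [Group G] (H : Subgroup G) (g : G) : Prop :=
  ∃ α : G, α ∈ H ∧ α * g * α⁻¹ = g⁻¹

/-- A subspace is invariant under an endomorphism. -/
def Invt (ψ : V →ₗ[K] V) (U : Submodule K V) : Prop :=
  ∀ x ∈ U, ψ x ∈ U

/-- The discriminant of a (finite-dimensional, nondegenerate) bilinear space is the class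
of `d` in `K*/(K*)²`: some Gram determinant equals `d` times a nonzero square. -/
def HasDisc (f : LinearMap.BilinForm K V) (d : K) : Prop :=
  ∃ (b : Basis (Fin (Module.finrank K V)) K V) (c : Kˣ),
    (Matrix.of fun i j => f (b i) (b j)).det = d * (c : K) ^ 2

/-- A nondegenerate symmetric bilinear space is hyperbolic iff its Witt index is half its
dimension, i.e. there is a totally isotropic subspace of half the dimension. -/
def IsHyperbolicSpace (f : LinearMap.BilinForm K V) : Prop :=
  ∃ W : Submodule K V, (∀ x ∈ W, ∀ y ∈ W, f x y = 0) ∧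
    2 * Module.finrank K W = Module.finrank K V

/-- The multiplicity of `p ^ d` as an elementary divisor of `φ`. -/
noncomputable def edMult (φ : Module.End K V) (p : K[X]) (d : ℕ) : ℕ :=
  (2 * Module.finrank K (LinearMap.ker (Polynomial.aeval φ p ^ d))
    - Module.finrank K (LinearMap.ker (Polynomial.aeval φ p ^ (d + 1)))
    - Module.finrank K (LinearMap.ker (Polynomial.aeval φ p ^ (d - 1)))) / p.natDegree

/-- `n_j(φ)`: the number of elementary divisors `(x ± 1) ^ d` of `φ` with `d ≡ j mod 8`,
counted with multiplicity. -/
noncomputable def nPM [FiniteDimensional K V] (φ : Module.End K V) (j : ℕ) : ℕ :=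
  ∑ d ∈ Finset.range (Module.finrank K V + 1),
    if d % 8 = j % 8 then edMult φ (X - 1) d + edMult φ (X + 1) d else 0

/-- The Fitting one space `Bahn^∞(ψ) = ⋂ⱼ im (ψ - 1)^j`. -/
noncomputable def bahnInf (ψ : Module.End K V) : Submodule K V :=
  ⨅ j : ℕ, LinearMap.range ((ψ - 1) ^ j)

/-- The `K[x]`-submodule generated by `v` (`x` acting as `ψ`). -/
def cycSub (ψ : Module.End K V) (v : V) : Submodule K V :=
  Submodule.span K (Set.range fun n : ℕ => (ψ ^ n) v)

/-- `V` is a cyclic `K[x]`-module, `x` acting as `ψ`. -/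
def IsCyclicEnd (ψ : Module.End K V) : Prop :=
  ∃ v : V, cycSub ψ v = ⊤

/-- `V` is a direct sum of two cyclic `K[x]`-submodules, `x` acting as `ψ`. -/
def IsBicyclicEnd (ψ : Module.End K V) : Prop :=
  ∃ v w : V, cycSub ψ v ⊓ cycSub ψ w = ⊥ ∧ cycSub ψ v ⊔ cycSub ψ w = ⊤

/-- `V` is an indecomposable `K[x]`-module, `x` acting as `ψ`. -/
def ModIndec (ψ : Module.End K V) : Prop :=
  (⊥ : Submodule K V) ≠ ⊤ ∧
    ¬∃ A B : Submodule K V, Invt ψ A ∧ Invt ψ B ∧ A ≠ ⊥ ∧ B ≠ ⊥ ∧ A ⊓ B = ⊥ ∧ A ⊔ B = ⊤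

/-- `ψ` is orthogonally indecomposable w.r.t. `f`: `V ≠ 0` and the only nondegenerate
invariant subspaces are `0` and `V`. -/
def OrthIndec (f : LinearMap.BilinForm K V) (ψ : Module.End K V) : Prop :=
  (⊥ : Submodule K V) ≠ ⊤ ∧
    ∀ U : Submodule K V, Invt ψ U → (f.restrict U).Nondegenerate → U = ⊥ ∨ U = ⊤

/-- The Witt index: the dimension of a maximal totally isotropic subspace. -/
noncomputable def wittIndex (f : LinearMap.BilinForm K V) : ℕ :=
  sSup {n | ∃ W : Submodule K V, (∀ x ∈ W, ∀ y ∈ W, f x y = 0) ∧ Module.finrank K W = n}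

/-!
For an isometry `φ` put `T = φ + φ⁻¹` and `D = φ - φ⁻¹`: then `T` is self-adjoint, `D` is
skew-adjoint, they commute and `D² = T² - 4`. If `V = F ⊥ N` with `F` and `N` invariant under `T`
and interchanged by `D`, the involution `1 ⊕ -1` of `F ⊥ N` commutes with `T` and anticommutes
with `D`, so it conjugates `φ` to `φ⁻¹`. It lies in `Ω(V)` as soon as `dim N` is even and
`disc N = 1`, because `N` then is an orthogonal sum of planes with an orthonormal basis, and `-1`
on such a plane is a commutator of reflections.

To find such a splitting, decompose `V` orthogonally into blocks generated by one or two vectors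
under `T` and `D`, and record which pairs `((-1) ^ dim N, disc N)` occur on each block. Some blocks
allow both discriminants of `N`. The others are, since `-1` is not a square, of two kinds: blocks of
dimension `4j` with the pair `(1, (-1) ^ j)`, and unipotent blocks (`±φ` unipotent of odd size
`2e - 1`) with the pair `(1, (-1) ^ ⌊e / 2⌋)`. Two unipotent blocks with the same `e` and the same
eigenvalue together allow both discriminants, so one may assume that the unipotent blocks are
pairwise different; then a count shows that `disc N = 1` is attained in dimensions `8` and `9`.
In dimension divisible by `4` with `disc V = -1`, one of `F` and `N` always has discriminant `1`.
-/

/-! ### Nondegenerate and orthogonal subspaces -/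

section Orthogonality

variable {f : LinearMap.BilinForm K V} {F G I P U W : Submodule K V}

/-- The restriction of `f` to `F` is nondegenerate; for the symmetric forms considered here it is
enough to ask that the left radical vanish. -/
def NondegOn (f : LinearMap.BilinForm K V) (F : Submodule K V) : Prop :=
  ∀ x ∈ F, (∀ y ∈ F, f x y = 0) → x = 0

/-- `F` and `G` are orthogonal to each other with respect to `f`. -/
def Perp (f : LinearMap.BilinForm K V) (F G : Submodule K V) : Prop :=
  ∀ x ∈ F, ∀ y ∈ G, f x y = 0

theorem Perp.mono {F' G' : Submodule K V} (h : Perp f F G) (hF : F' ≤ F) (hG : G' ≤ G) :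
    Perp f F' G' :=
  fun x hx y hy => h x (hF hx) y (hG hy)

theorem Perp.symm (hf : f.IsSymm) (h : Perp f F G) : Perp f G F :=
  fun x hx y hy => by rw [hf.eq]; exact h y hy x hx

theorem Perp.sup_left (hF : Perp f F W) (hG : Perp f G W) : Perp f (F ⊔ G) W := by
  intro x hx y hy
  obtain ⟨a, ha, b, hb, rfl⟩ := Submodule.mem_sup.1 hx
  rw [map_add, LinearMap.add_apply, hF a ha y hy, hG b hb y hy, add_zero]

theorem Perp.sup_right (hF : Perp f W F) (hG : Perp f W G) : Perp f W (F ⊔ G) := by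
  intro x hx y hy
  obtain ⟨a, ha, b, hb, rfl⟩ := Submodule.mem_sup.1 hy
  rw [map_add, hF x hx a ha, hG x hx b hb, add_zero]

theorem perp_inf_orthogonal (f : LinearMap.BilinForm K V) (U W : Submodule K V) :
    Perp f U (W ⊓ f.orthogonal U) :=
  fun x hx _ hy => hy.2 x hx

theorem nondegOn_bot (f : LinearMap.BilinForm K V) : NondegOn f ⊥ :=
  fun _ hx _ => (Submodule.mem_bot K).1 hx

theorem NondegOn.disjoint_of_perp (hf : f.IsSymm) (hF : NondegOn f F) (h : Perp f F G) :
    Disjoint F G :=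
  Submodule.disjoint_def.2 fun x hxF hxG =>
    hF x hxF fun y hy => by rw [hf.eq]; exact h y hy x hxG

theorem NondegOn.sup (hf : f.IsSymm) (hF : NondegOn f F) (hG : NondegOn f G) (h : Perp f F G) :
    NondegOn f (F ⊔ G) := by
  intro x hx hxy
  obtain ⟨a, ha, b, hb, rfl⟩ := Submodule.mem_sup.1 hx
  have ha0 : a = 0 := hF a ha fun y hy => by
    have := hxy y (Submodule.mem_sup_left hy)
    rwa [map_add, LinearMap.add_apply, hf.eq b, h y hy b hb, add_zero] at this
  have hb0 : b = 0 := hG b hb fun y hy => by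
    have := hxy y (Submodule.mem_sup_right hy)
    rwa [map_add, LinearMap.add_apply, h a ha y hy, zero_add] at this
  rw [ha0, hb0, add_zero]

theorem NondegOn.sup_inf_orthogonal [FiniteDimensional K V] (hf : f.IsSymm) (hU : NondegOn f U)
    (hUW : U ≤ W) : U ⊔ W ⊓ f.orthogonal U = W := by
  have hcompl : IsCompl U (f.orthogonal U) :=
    (LinearMap.BilinForm.isCompl_orthogonal_iff_disjoint hf.isRefl).2
      (hU.disjoint_of_perp hf fun x hx y hy => hy x hx)
  rw [inf_comm, ← sup_inf_assoc_of_le _ hUW, hcompl.sup_eq_top, top_inf_eq]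

theorem NondegOn.inf_orthogonal [FiniteDimensional K V] (hf : f.IsSymm) (hW : NondegOn f W)
    (hU : NondegOn f U) (hUW : U ≤ W) : NondegOn f (W ⊓ f.orthogonal U) := by
  intro x hx hxy
  refine hW x hx.1 fun y hy => ?_
  rw [← hU.sup_inf_orthogonal hf hUW] at hy
  obtain ⟨u, hu, p, hp, rfl⟩ := Submodule.mem_sup.1 hy
  rw [map_add, hxy p hp, hf.eq, hx.2 u hu, add_zero]

/-- By polarization, a symmetric form vanishing on the diagonal is zero. -/
theorem NondegOn.exists_apply_ne_zero (hf : f.IsSymm) (h2 : (2 : K) ≠ 0) (hW : NondegOn f W)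
    {L : Module.End K V} (hL : f.IsSelfAdjoint L) (hLW : Invt L W) {u : V} (hu : u ∈ W)
    (hu0 : L u ≠ 0) : ∃ v ∈ W, f (L v) v ≠ 0 := by
  by_contra! hdiag
  refine hu0 (hW _ (hLW u hu) fun w hw => ?_)
  have hadd := hdiag _ (W.add_mem hu hw)
  have hsymm : f (L w) u = f (L u) w := (hL w u).trans (hf.eq _ _)
  rw [map_add, map_add, map_add, LinearMap.add_apply, LinearMap.add_apply, hdiag u hu,
    hdiag w hw, hsymm] at hadd
  have htwo : 2 * f (L u) w = 0 := by linear_combination hadd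
  exact (mul_eq_zero.1 htwo).resolve_left h2

theorem finrank_sup_of_disjoint [FiniteDimensional K V] (h : Disjoint F G) :
    finrank K ↥(F ⊔ G) = finrank K F + finrank K G := by
  have := Submodule.finrank_sup_add_finrank_inf_eq F G
  rwa [h.eq_bot, finrank_bot, add_zero] at this

theorem NondegOn.finrank_add_finrank_inf_orthogonal [FiniteDimensional K V] (hf : f.IsSymm)
    (hU : NondegOn f U) (hUW : U ≤ W) :
    finrank K U + finrank K ↥(W ⊓ f.orthogonal U) = finrank K W := by
  rw [← finrank_sup_of_disjoint (hU.disjoint_of_perp hf (perp_inf_orthogonal f U W)),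
    hU.sup_inf_orthogonal hf hUW]

end Orthogonality

/-! ### Discriminants of subspaces -/

section Discriminant

theorem span_range_coe_basis {F : Submodule K V} {ι : Type*} (b : Basis ι K F) :
    Submodule.span K (Set.range fun i => (b i : V)) = F := by
  have := congrArg (Submodule.map F.subtype) b.span_eq
  rwa [Submodule.map_span, ← Set.range_comp, Submodule.map_top, Submodule.range_subtype] at this

theorem linearIndependent_coe_basis {F : Submodule K V} {ι : Type*} (b : Basis ι K F) :
    LinearIndependent K fun i => (b i : V) :=
  b.linearIndependent.map' F.subtype F.ker_subtype

/-- The Gram matrix of a family of vectors. -/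
def gramMatrix {ι : Type*} (f : LinearMap.BilinForm K V) (v : ι → V) : Matrix ι ι K :=
  Matrix.of fun i j => f (v i) (v j)

theorem det_fromBlocks_zero₁₁_of_square {n : Type*} [Fintype n] [DecidableEq n]
    (B C D : Matrix n n K) :
    (Matrix.fromBlocks 0 B C D).det = (-1) ^ Fintype.card n * (B.det * C.det) := by
  have hswap : (Matrix.fromBlocks 0 1 (-1) 0 : Matrix (n ⊕ n) (n ⊕ n) K).det = 1 := by
    have : (Matrix.fromBlocks 0 1 (-1) 0 : Matrix (n ⊕ n) (n ⊕ n) K)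
        = Matrix.fromBlocks 1 1 0 1 * Matrix.fromBlocks 1 0 (-1) 1
          * Matrix.fromBlocks 1 1 0 1 := by
      simp [Matrix.fromBlocks_multiply]
    simp [this]
  have hmul : Matrix.fromBlocks 0 B C D * Matrix.fromBlocks 0 1 (-1) 0
      = Matrix.fromBlocks (-B) 0 (-D) C := by
    simp [Matrix.fromBlocks_multiply]
  have hdet := congrArg Matrix.det hmul
  rw [Matrix.det_mul, hswap, mul_one, Matrix.det_fromBlocks_zero₁₂, Matrix.det_neg] at hdet
  rw [hdet, mul_assoc]

variable [Fintype K] [DecidableEq K]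

theorem exists_units_eq_quadraticChar {a : K} (ha : a ≠ 0) :
    ∃ s : ℤˣ, (s : ℤ) = quadraticChar K a := by
  rcases quadraticChar_dichotomy ha with h | h
  exacts [⟨1, h.symm⟩, ⟨-1, h.symm⟩]

theorem quadraticChar_det_gramMatrix_eq {ι : Type*} [Fintype ι] [DecidableEq ι] {κ : Type*}
    [Fintype κ] [DecidableEq κ] (f : LinearMap.BilinForm K V) (b : Basis ι K V) (c : Basis κ K V) :
    quadraticChar K (gramMatrix f b).det = quadraticChar K (gramMatrix f c).det := by
  let e : ι ≃ κ := b.indexEquiv c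
  have hgram : ∀ b' : Basis κ K V, gramMatrix f b' = LinearMap.BilinForm.toMatrix b' f :=
    fun b' => Matrix.ext fun i j => (LinearMap.BilinForm.toMatrix_apply b' f i j).symm
  have hreindex : (gramMatrix f b).det = (gramMatrix f (b.reindex e)).det := by
    rw [← Matrix.det_reindex_self e]
    congr 1
    ext i j
    simp [gramMatrix]
  have hunit : (c.toMatrix (b.reindex e)).det ≠ 0 := by
    have := congrArg Matrix.det (Basis.toMatrix_mul_toMatrix_flip c (b.reindex e))
    rw [Matrix.det_mul, Matrix.det_one] at this
    exact left_ne_zero_of_mul_eq_one this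
  rw [hreindex, hgram, hgram, ← LinearMap.BilinForm.toMatrix_mul_basis_toMatrix c (b.reindex e) f,
    Matrix.det_mul, Matrix.det_mul, Matrix.det_transpose, mul_right_comm, ← sq, map_mul,
    quadraticChar_sq_one' hunit, one_mul]

variable [FiniteDimensional K V] {f : LinearMap.BilinForm K V} {F G I P : Submodule K V}

/-- The quadratic character of the discriminant of `F`: it is `1` or `-1` according to whether the
discriminant is a square or not, and `0` when `F` is degenerate. -/
noncomputable def discSign (f : LinearMap.BilinForm K V) (F : Submodule K V) : ℤ :=
  quadraticChar K (gramMatrix f fun i => (Module.finBasis K F i : V)).det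

theorem discSign_eq_quadraticChar_det (f : LinearMap.BilinForm K V) {ι : Type*} [Fintype ι]
    [DecidableEq ι] {v : ι → V} (hv : LinearIndependent K v)
    (hs : Submodule.span K (Set.range v) = F) :
    discSign f F = quadraticChar K (gramMatrix f v).det := by
  subst hs
  refine (quadraticChar_det_gramMatrix_eq (f.restrict _) (Module.finBasis K _)
    (Basis.span hv)).trans ?_
  congr 2
  ext i j
  simp [gramMatrix, Basis.span_apply]

theorem discSign_bot (f : LinearMap.BilinForm K V) : discSign f ⊥ = 1 := by
  rw [discSign_eq_quadraticChar_det f (v := (Fin.elim0 : Fin 0 → V)) linearIndependent_empty_type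
    (by simp), Matrix.det_fin_zero, map_one]

theorem nondegOn_iff_discSign_ne_zero : NondegOn f F ↔ discSign f F ≠ 0 := by
  have hgram : gramMatrix f (fun i => (Module.finBasis K F i : V))
      = LinearMap.BilinForm.toMatrix (Module.finBasis K F) (f.restrict F) :=
    Matrix.ext fun i j =>
      (LinearMap.BilinForm.toMatrix_apply (Module.finBasis K F) (f.restrict F) i j).symm
  rw [discSign, hgram, Ne, quadraticChar_eq_zero_iff, ← Ne,
    ← LinearMap.BilinForm.nondegenerate_iff_det_ne_zero]
  constructor
  · intro h
    exact LinearMap.BilinForm.Nondegenerate.ofSeparatingLeft fun x hx =>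
      Subtype.ext (h x x.2 fun y hy => hx ⟨y, hy⟩)
  · intro h x hx hxy
    exact congrArg Subtype.val (h.1 ⟨x, hx⟩ fun y => hxy y y.2)

theorem NondegOn.exists_units_discSign_eq (hF : NondegOn f F) :
    ∃ s : ℤˣ, (s : ℤ) = discSign f F :=
  exists_units_eq_quadraticChar fun hdet =>
    nondegOn_iff_discSign_ne_zero.1 hF (by rw [discSign, hdet, quadraticChar_zero])

theorem discSign_sup_eq_quadraticChar_det_fromBlocks {ι κ : Type*} [Fintype ι] [DecidableEq ι]
    [Fintype κ] [DecidableEq κ] (f : LinearMap.BilinForm K V) (h : Disjoint F G) (b : Basis ι K F)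
    (c : Basis κ K G) :
    discSign f (F ⊔ G) = quadraticChar K (Matrix.fromBlocks
      (gramMatrix f fun i => (b i : V)) (Matrix.of fun i j => f (b i) (c j))
      (Matrix.of fun i j => f (c i) (b j)) (gramMatrix f fun i => (c i : V))).det := by
  have hli : LinearIndependent K (Sum.elim (fun i => (b i : V)) fun i => (c i : V)) :=
    (linearIndependent_coe_basis b).sum_type (linearIndependent_coe_basis c)
      (by rwa [span_range_coe_basis, span_range_coe_basis])
  rw [discSign_eq_quadraticChar_det f hli (by
    rw [Set.Sum.elim_range, Submodule.span_union, span_range_coe_basis, span_range_coe_basis])]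
  congr 2
  ext (i | i) (j | j) <;> rfl

theorem discSign_sup (h : Perp f F G) (hd : Disjoint F G) :
    discSign f (F ⊔ G) = discSign f F * discSign f G := by
  have hzero :
      (Matrix.of fun i j => f (Module.finBasis K F i : V) (Module.finBasis K G j : V)) = 0 :=
    Matrix.ext fun i j => h _ (Module.finBasis K F i).2 _ (Module.finBasis K G j).2
  rw [discSign_sup_eq_quadraticChar_det_fromBlocks f hd (Module.finBasis K F) (Module.finBasis K G),
    hzero, Matrix.det_fromBlocks_zero₁₂, map_mul, discSign, discSign]

theorem discSign_of_isotropic_half (hf : f.IsSymm) (hF : NondegOn f F) (hI : I ≤ F)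
    (hiso : Perp f I I) (hdim : 2 * finrank K I = finrank K F) :
    discSign f F = quadraticChar K (-1) ^ finrank K I := by
  obtain ⟨C, hIC, hdis⟩ : ∃ C, I ⊔ C = F ∧ Disjoint I C := by
    obtain ⟨C, hC⟩ := exists_isCompl I
    refine ⟨C ⊓ F, ?_, hC.disjoint.mono_right inf_le_left⟩
    rw [← sup_inf_assoc_of_le _ hI, hC.sup_eq_top, top_inf_eq]
  have hdC : finrank K C = finrank K I := by
    have := finrank_sup_of_disjoint hdis
    rw [hIC] at this
    omega
  let b := Module.finBasis K I
  let c := (Module.finBasis K C).reindex (finCongr hdC)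
  have hzero : (gramMatrix f fun i => (b i : V)) = 0 :=
    Matrix.ext fun i j => hiso _ (b i).2 _ (b j).2
  have htranspose : (Matrix.of fun i j => f (c i) (b j))
      = (Matrix.of fun i j => f (b i) (c j)).transpose :=
    Matrix.ext fun i j => hf.eq _ _
  have hdisc := discSign_sup_eq_quadraticChar_det_fromBlocks f hdis b c
  rw [hIC, hzero, htranspose, det_fromBlocks_zero₁₁_of_square, Matrix.det_transpose, ← sq, map_mul,
    map_pow, Fintype.card_fin] at hdisc
  have hne : (Matrix.of fun i j => f (b i : V) (c j : V)).det ≠ 0 := fun h0 =>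
    nondegOn_iff_discSign_ne_zero.1 hF
      (by rw [hdisc, h0, zero_pow two_ne_zero, quadraticChar_zero, mul_zero])
  rw [hdisc, quadraticChar_sq_one' hne, mul_one]

theorem discSign_of_isotropic (hf : f.IsSymm) (hF : NondegOn f F) (hP : NondegOn f P)
    (hPF : P ≤ F) (hIF : I ≤ F) (hPI : Perp f P I) (hiso : Perp f I I)
    (hdim : finrank K P + 2 * finrank K I = finrank K F) :
    discSign f F = discSign f P * quadraticChar K (-1) ^ finrank K I := by
  have hcompl := hP.finrank_add_finrank_inf_orthogonal hf hPF
  have hperp := perp_inf_orthogonal f P F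
  conv_lhs => rw [← hP.sup_inf_orthogonal hf hPF]
  rw [discSign_sup hperp (hP.disjoint_of_perp hf hperp),
    discSign_of_isotropic_half hf (hF.inf_orthogonal hf hP hPF)
      (le_inf hIF fun y hy x hx => hPI x hx y hy) hiso (by omega)]

end Discriminant

/-! ### Cyclic subspaces and orders of vectors -/

section Cyclic

variable {T : Module.End K V} {x y : V} {W : Submodule K V} {g h r : K[X]} {e : ℕ}

theorem aeval_mul_apply (T : Module.End K V) (p q : K[X]) (x : V) :
    aeval T (p * q) x = aeval T p (aeval T q x) := by
  rw [map_mul, Module.End.mul_apply]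

theorem aeval_add_apply (T : Module.End K V) (p q : K[X]) (x : V) :
    aeval T (p + q) x = aeval T p x + aeval T q x := by
  rw [map_add, LinearMap.add_apply]

theorem aeval_C_mul_apply (T : Module.End K V) (a : K) (p : K[X]) (x : V) :
    aeval T (C a * p) x = a • aeval T p x := by
  rw [aeval_mul_apply, aeval_C, Module.algebraMap_end_apply]

theorem aeval_apply_eq_zero_of_dvd (hg : aeval T g x = 0) (hdvd : g ∣ h) : aeval T h x = 0 := by
  obtain ⟨p, rfl⟩ := hdvd
  rw [mul_comm, aeval_mul_apply, hg, map_zero]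

theorem Invt.aeval_mem (hW : Invt T W) (p : K[X]) (hx : x ∈ W) : aeval T p x ∈ W :=
  Polynomial.aeval_apply_smul_mem_of_le_comap hx p T hW

theorem aeval_mem_cycSub (T : Module.End K V) (x : V) (p : K[X]) : aeval T p x ∈ cycSub T x := by
  rw [aeval_eq_sum_range, LinearMap.sum_apply]
  exact Submodule.sum_mem _ fun n _ =>
    Submodule.smul_mem _ _ (Submodule.subset_span ⟨n, rfl⟩)

theorem mem_cycSub : y ∈ cycSub T x ↔ ∃ p : K[X], aeval T p x = y := by
  refine ⟨fun hy => ?_, fun ⟨p, hp⟩ => hp ▸ aeval_mem_cycSub T x p⟩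
  induction hy using Submodule.span_induction with
  | mem _ hz =>
    obtain ⟨n, rfl⟩ := hz
    exact ⟨X ^ n, by rw [aeval_X_pow]⟩
  | zero => exact ⟨0, by rw [map_zero, LinearMap.zero_apply]⟩
  | add _ _ _ _ hy hz =>
    obtain ⟨⟨p, rfl⟩, q, rfl⟩ := hy, hz
    exact ⟨p + q, aeval_add_apply T p q x⟩
  | smul a _ _ hy =>
    obtain ⟨p, rfl⟩ := hy
    exact ⟨C a * p, aeval_C_mul_apply T a p x⟩

theorem self_mem_cycSub (T : Module.End K V) (x : V) : x ∈ cycSub T x :=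
  mem_cycSub.2 ⟨1, by rw [map_one, Module.End.one_apply]⟩

theorem invt_cycSub (T : Module.End K V) (x : V) : Invt T (cycSub T x) := by
  intro y hy
  obtain ⟨p, rfl⟩ := mem_cycSub.1 hy
  exact mem_cycSub.2 ⟨X * p, by rw [aeval_mul_apply, aeval_X]⟩

theorem Invt.cycSub_le (hW : Invt T W) (hx : x ∈ W) : cycSub T x ≤ W := by
  intro y hy
  obtain ⟨p, rfl⟩ := mem_cycSub.1 hy
  exact hW.aeval_mem p hx

theorem cycSub_aeval_le (T : Module.End K V) (x : V) (p : K[X]) :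
    cycSub T (aeval T p x) ≤ cycSub T x :=
  (invt_cycSub T x).cycSub_le (aeval_mem_cycSub T x p)

/-- The annihilator of `x` in `K[X]`, acting through `T`, is the ideal generated by `g`. -/
def HasOrder (T : Module.End K V) (x : V) (g : K[X]) : Prop :=
  ∀ p : K[X], aeval T p x = 0 ↔ g ∣ p

theorem HasOrder.aeval_eq_zero (hx : HasOrder T x g) : aeval T g x = 0 :=
  (hx g).2 dvd_rfl

theorem HasOrder.aeval_apply (hx : HasOrder T x (g * h)) (hg : g ≠ 0) :
    HasOrder T (aeval T g x) h := fun p => by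
  rw [← aeval_mul_apply, hx, mul_comm p, mul_dvd_mul_iff_left hg]

theorem pow_pred_mem_span_of_not_dvd (hr : Irreducible r) {p : K[X]} (hp : ¬r ^ e ∣ p) :
    ∃ a b : K[X], r ^ (e - 1) = a * p + b * r ^ e := by
  classical
  obtain ⟨i, hi, hgcd⟩ :=
    (dvd_prime_pow hr.prime e).1 (EuclideanDomain.gcd_dvd_right p (r ^ e))
  have hie : i ≠ e := by
    rintro rfl
    exact hp (hgcd.symm.dvd.trans (EuclideanDomain.gcd_dvd_left _ _))
  obtain ⟨c, hc⟩ : EuclideanDomain.gcd p (r ^ e) ∣ r ^ (e - 1) :=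
    hgcd.dvd.trans (pow_dvd_pow _ (by omega))
  rw [EuclideanDomain.gcd_eq_gcd_ab p (r ^ e)] at hc
  exact ⟨c * EuclideanDomain.gcdA p (r ^ e), c * EuclideanDomain.gcdB p (r ^ e), by rw [hc]; ring⟩

theorem hasOrder_pow (hr : Irreducible r) (hzero : aeval T (r ^ e) x = 0)
    (hne : aeval T (r ^ (e - 1)) x ≠ 0) : HasOrder T x (r ^ e) := by
  refine fun p => ⟨fun hp => ?_, fun hp => aeval_apply_eq_zero_of_dvd hzero hp⟩
  by_contra hdvd
  obtain ⟨a, b, hab⟩ := pow_pred_mem_span_of_not_dvd hr hdvd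
  refine hne ?_
  rw [hab, aeval_add_apply, aeval_mul_apply, aeval_mul_apply, hp, hzero, map_zero, map_zero,
    add_zero]

theorem mem_span_range_aeval_X_pow {n : ℕ} :
    y ∈ Submodule.span K (Set.range fun i : Fin n => aeval T (X ^ (i : ℕ) : K[X]) x)
      ↔ ∃ p ∈ degreeLT K n, aeval T p x = y := by
  classical
  have himage : (Set.range fun i : Fin n => aeval T (X ^ (i : ℕ) : K[X]) x)
      = (LinearMap.applyₗ x ∘ₗ (aeval T).toLinearMap) ''
        ((Finset.range n).image fun i => (X ^ i : K[X])) := by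
    ext z
    simp [Fin.exists_iff]
  rw [himage, ← Submodule.map_span, ← degreeLT_eq_span_X_pow]
  rfl

theorem HasOrder.linearIndependent (hx : HasOrder T x g) (hg : g ≠ 0) {n : ℕ}
    (hn : n ≤ g.natDegree) :
    LinearIndependent K fun i : Fin n => aeval T (X ^ (i : ℕ) : K[X]) x := by
  rw [Fintype.linearIndependent_iff]
  intro a ha i
  set p : K[X] := ∑ i : Fin n, C (a i) * X ^ (i : ℕ) with hp
  have hpx : aeval T p x = 0 := by
    rw [hp, map_sum, LinearMap.sum_apply, ← ha]
    exact Finset.sum_congr rfl fun i _ => aeval_C_mul_apply T _ _ x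
  have hdeg : p.degree < g.degree := by
    rw [degree_eq_natDegree hg]
    exact (degree_sum_fin_lt a).trans_le (by exact_mod_cast hn)
  have hcoeff := congrArg (coeff · i) (eq_zero_of_dvd_of_degree_lt ((hx p).1 hpx) hdeg)
  simp only [hp, finsetSum_coeff, coeff_C_mul, coeff_X_pow, coeff_zero] at hcoeff
  simpa [Fin.val_inj] using hcoeff

theorem HasOrder.span_eq_cycSub (hx : HasOrder T x g) (hg : g.Monic) :
    Submodule.span K (Set.range fun i : Fin g.natDegree => aeval T (X ^ (i : ℕ) : K[X]) x)
      = cycSub T x := by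
  ext y
  rw [mem_span_range_aeval_X_pow, mem_cycSub]
  refine ⟨fun ⟨p, _, hp⟩ => ⟨p, hp⟩, ?_⟩
  rintro ⟨p, rfl⟩
  refine ⟨p %ₘ g, ?_, ?_⟩
  · rw [mem_degreeLT, ← degree_eq_natDegree hg.ne_zero]
    exact degree_modByMonic_lt p hg
  · conv_rhs => rw [← modByMonic_add_div p g]
    rw [aeval_add_apply, (hx (g * _)).2 (dvd_mul_right _ _), add_zero]

theorem HasOrder.finrank_cycSub (hx : HasOrder T x g) (hg : g.Monic) :
    finrank K (cycSub T x) = g.natDegree := by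
  rw [← hx.span_eq_cycSub hg, finrank_span_eq_card (hx.linearIndependent hg.ne_zero le_rfl),
    Fintype.card_fin]

end Cyclic

section SelfAdjoint

variable {f : LinearMap.BilinForm K V} {T : Module.End K V} {x y : V} {r : K[X]} {e h : ℕ}

theorem apply_aeval_left (hT : f.IsSelfAdjoint T) (p : K[X]) (x y : V) :
    f (aeval T p x) y = f x (aeval T p y) := by
  induction p using Polynomial.induction_on generalizing x y with
  | C a => simp [aeval_C]
  | add p q hp hq => simp only [map_add, LinearMap.add_apply, hp, hq]
  | monomial n a ih =>
    rw [pow_succ, ← mul_assoc, aeval_mul_apply, ih, aeval_X, mul_comm _ X, aeval_mul_apply T X,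
      aeval_X]
    exact hT _ _

theorem perp_cycSub (hT : f.IsSelfAdjoint T) (h : ∀ p : K[X], f (aeval T p x) y = 0) :
    Perp f (cycSub T x) (cycSub T y) := by
  intro a ha b hb
  obtain ⟨p, rfl⟩ := mem_cycSub.1 ha
  obtain ⟨q, rfl⟩ := mem_cycSub.1 hb
  rw [← apply_aeval_left hT, ← aeval_mul_apply]
  exact h _

theorem apply_aeval_aeval (hT : f.IsSelfAdjoint T) (p q : K[X]) (x y : V) :
    f (aeval T p x) (aeval T q y) = f (aeval T (p * q) x) y := by
  rw [mul_comm, aeval_mul_apply, apply_aeval_left hT q]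

theorem nondegOn_cycSub (hT : f.IsSelfAdjoint T) (hr : Irreducible r)
    (hzero : aeval T (r ^ e) x = 0) {t : K[X]} (ht : f (aeval T (t * r ^ (e - 1)) x) x ≠ 0) :
    NondegOn f (cycSub T x) := by
  intro y hy hperp
  obtain ⟨p, rfl⟩ := mem_cycSub.1 hy
  by_contra hpx
  have hdvd : ¬r ^ e ∣ p := fun hdvd => hpx (aeval_apply_eq_zero_of_dvd hzero hdvd)
  obtain ⟨a, b, hab⟩ := pow_pred_mem_span_of_not_dvd hr hdvd
  refine ht ?_
  rw [hab, mul_add, aeval_add_apply, ← mul_assoc, ← mul_assoc,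
    aeval_apply_eq_zero_of_dvd hzero (dvd_mul_left _ _), add_zero, mul_comm,
    ← apply_aeval_aeval hT]
  exact hperp _ (aeval_mem_cycSub T x _)

theorem HasOrder.perp_cycSub_aeval {g p q : K[X]} (hx : HasOrder T x g) (hT : f.IsSelfAdjoint T)
    (hg : g ∣ p * q) : Perp f (cycSub T (aeval T p x)) (cycSub T (aeval T q x)) :=
  perp_cycSub hT fun s => by
    rw [← aeval_mul_apply, apply_aeval_aeval hT, (hx _).2 (by rw [mul_assoc]; exact hg.mul_left s),
      map_zero, LinearMap.zero_apply]

theorem nondegOn_span_middle (hT : f.IsSelfAdjoint T) (hr : Irreducible r) (hm : r.Monic)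
    (hx : HasOrder T x (r ^ (2 * h + 1))) (hnd : NondegOn f (cycSub T x)) :
    NondegOn f (Submodule.span K
      (Set.range fun i : Fin r.natDegree => aeval T (X ^ (i : ℕ) : K[X]) (aeval T (r ^ h) x))) := by
  intro y hy hperp
  obtain ⟨p, hp, rfl⟩ := mem_span_range_aeval_X_pow.1 hy
  rw [mem_degreeLT, ← degree_eq_natDegree hm.ne_zero] at hp
  have hpx : aeval T (p * r ^ (2 * h)) x = 0 := by
    refine hnd _ (aeval_mem_cycSub T x _) fun z hz => ?_
    obtain ⟨q, rfl⟩ := mem_cycSub.1 hz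
    have hsplit : p * r ^ (2 * h) * q
        = p * r ^ h * ((q %ₘ r) * r ^ h) + r ^ (2 * h + 1) * (p * (q /ₘ r)) := by
      conv_lhs => rw [← modByMonic_add_div q r]
      ring
    rw [apply_aeval_aeval hT, hsplit, aeval_add_apply, (hx (r ^ (2 * h + 1) * _)).2
      (dvd_mul_right _ _), add_zero, ← apply_aeval_aeval hT, aeval_mul_apply, aeval_mul_apply]
    refine hperp _ (mem_span_range_aeval_X_pow.2 ⟨_, ?_, rfl⟩)
    rw [mem_degreeLT, ← degree_eq_natDegree hm.ne_zero]
    exact degree_modByMonic_lt q hm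
  have hdvd : r ∣ p := by
    have := (hx _).1 hpx
    rwa [pow_succ', mul_dvd_mul_iff_right (pow_ne_zero _ hr.ne_zero)] at this
  rw [eq_zero_of_dvd_of_degree_lt hdvd hp, map_zero, LinearMap.zero_apply]

variable [Fintype K] [DecidableEq K] [FiniteDimensional K V]

theorem discSign_cycSub_even (hf : f.IsSymm) (hT : f.IsSelfAdjoint T) (hm : r.Monic)
    (hx : HasOrder T x (r ^ (2 * h))) (hnd : NondegOn f (cycSub T x)) :
    discSign f (cycSub T x) = quadraticChar K (-1) ^ (h * r.natDegree) := by
  have hI : finrank K (cycSub T (aeval T (r ^ h) x)) = h * r.natDegree := by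
    rw [two_mul, pow_add] at hx
    rw [(hx.aeval_apply (hm.pow h).ne_zero).finrank_cycSub (hm.pow h), hm.natDegree_pow]
  rw [← hI]
  refine discSign_of_isotropic_half hf hnd (cycSub_aeval_le T x _)
    (hx.perp_cycSub_aeval hT (by rw [two_mul, pow_add])) ?_
  rw [hI, hx.finrank_cycSub (hm.pow _), hm.natDegree_pow, mul_assoc]

theorem discSign_cycSub_odd (hf : f.IsSymm) (hT : f.IsSelfAdjoint T) (hr : Irreducible r)
    (hm : r.Monic) (hx : HasOrder T x (r ^ (2 * h + 1))) (hnd : NondegOn f (cycSub T x)) :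
    discSign f (cycSub T x) = quadraticChar K (gramMatrix f fun i : Fin r.natDegree =>
      aeval T (X ^ (i : ℕ) : K[X]) (aeval T (r ^ h) x)).det
        * quadraticChar K (-1) ^ (h * r.natDegree) := by
  have hI : finrank K (cycSub T (aeval T (r ^ (h + 1)) x)) = h * r.natDegree := by
    rw [show 2 * h + 1 = h + 1 + h by ring, pow_add] at hx
    rw [(hx.aeval_apply (hm.pow _).ne_zero).finrank_cycSub (hm.pow h), hm.natDegree_pow]
  have hli : LinearIndependent K fun i : Fin r.natDegree =>
      aeval T (X ^ (i : ℕ) : K[X]) (aeval T (r ^ h) x) := by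
    rw [show 2 * h + 1 = h + (h + 1) by ring, pow_add] at hx
    refine (hx.aeval_apply (hm.pow h).ne_zero).linearIndependent (hm.pow _).ne_zero ?_
    rw [hm.natDegree_pow]
    exact Nat.le_mul_of_pos_left _ h.succ_pos
  have hmiddle : Submodule.span K (Set.range fun i : Fin r.natDegree =>
      aeval T (X ^ (i : ℕ) : K[X]) (aeval T (r ^ h) x)) ≤ cycSub T (aeval T (r ^ h) x) :=
    Submodule.span_le.2 (Set.range_subset_iff.2 fun i => aeval_mem_cycSub T _ _)
  rw [← discSign_eq_quadraticChar_det f hli rfl, ← hI]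
  refine discSign_of_isotropic hf hnd (nondegOn_span_middle hT hr hm hx hnd)
    (hmiddle.trans (cycSub_aeval_le T x _)) (cycSub_aeval_le T x _)
    ((hx.perp_cycSub_aeval hT ?_).mono hmiddle le_rfl) (hx.perp_cycSub_aeval hT ?_) ?_
  · rw [← pow_add]
    exact pow_dvd_pow _ (by omega)
  · rw [← pow_add]
    exact pow_dvd_pow _ (by omega)
  · rw [finrank_span_eq_card hli, Fintype.card_fin, hI, hx.finrank_cycSub (hm.pow _),
      hm.natDegree_pow]
    ring

end SelfAdjoint

/-! ### Splittings reversed by the skew part -/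

theorem sup_le_comap_sup {L : Module.End K V} {A₁ A₂ B₁ B₂ : Submodule K V}
    (h₁ : A₁ ≤ B₁.comap L) (h₂ : A₂ ≤ B₂.comap L) : A₁ ⊔ A₂ ≤ (B₁ ⊔ B₂).comap L :=
  sup_le (h₁.trans (Submodule.comap_mono le_sup_left))
    (h₂.trans (Submodule.comap_mono le_sup_right))

theorem Invt.sup {L : Module.End K V} {A B : Submodule K V} (hA : Invt L A) (hB : Invt L B) :
    Invt L (A ⊔ B) :=
  sup_le_comap_sup hA hB

section SymmSkewPair

variable {f : LinearMap.BilinForm K V} {T D : Module.End K V} {x y : V}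

/-- The properties shared by the self-adjoint part `T = φ + φ⁻¹` and the skew-adjoint part
`D = φ - φ⁻¹` of an isometry `φ`. -/
structure SymmSkewPair (f : LinearMap.BilinForm K V) (T D : Module.End K V) : Prop where
  isSymm : f.IsSymm
  two_ne_zero : (2 : K) ≠ 0
  selfAdjoint : f.IsSelfAdjoint T
  skewAdjoint : f.IsSkewAdjoint D
  commute : Commute T D
  skew_mul_skew : D * D = aeval T (X ^ 2 - C 4 : K[X])

namespace SymmSkewPair

theorem skew_apply_left (S : SymmSkewPair f T D) (x y : V) : f (D x) y = -f x (D y) :=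
  (S.skewAdjoint x y).trans (map_neg (f x) (D y))

theorem skew_skew (S : SymmSkewPair f T D) (x : V) : D (D x) = aeval T (X ^ 2 - C 4 : K[X]) x :=
  LinearMap.congr_fun S.skew_mul_skew x

theorem aeval_skew (S : SymmSkewPair f T D) (p : K[X]) (x : V) :
    aeval T p (D x) = D (aeval T p x) := by
  have hcomm : Commute (aeval T p) D := by
    induction p using Polynomial.induction_on' with
    | add p q hp hq => rw [map_add]; exact hp.add_left hq
    | monomial n a =>
      rw [aeval_monomial]
      exact (Algebra.commute_algebraMap_left a D).mul_left (S.commute.pow_left n)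
  exact LinearMap.congr_fun hcomm.eq x

theorem apply_aeval_skew_self (S : SymmSkewPair f T D) (p : K[X]) (x : V) :
    f (aeval T p x) (D x) = 0 := by
  have hneg : f (aeval T p x) (D x) = -f (aeval T p x) (D x) := by
    conv_lhs =>
      rw [S.isSymm.eq, S.skew_apply_left, ← S.aeval_skew, ← apply_aeval_left S.selfAdjoint]
  have htwo : 2 * f (aeval T p x) (D x) = 0 := by linear_combination hneg
  exact (mul_eq_zero.1 htwo).resolve_left S.two_ne_zero

theorem apply_aeval_skew_skew (S : SymmSkewPair f T D) (p : K[X]) (x y : V) :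
    f (aeval T p (D x)) (D y) = -f (aeval T (p * (X ^ 2 - C 4)) x) y := by
  rw [S.aeval_skew, S.skew_apply_left, S.skew_skew, ← apply_aeval_left S.selfAdjoint,
    ← aeval_mul_apply, mul_comm]

theorem perp_cycSub_skew (S : SymmSkewPair f T D) (x : V) :
    Perp f (cycSub T x) (cycSub T (D x)) :=
  perp_cycSub S.selfAdjoint fun p => S.apply_aeval_skew_self p x

theorem cycSub_le_comap_skew (S : SymmSkewPair f T D) (x : V) :
    cycSub T x ≤ (cycSub T (D x)).comap D := by
  intro y hy
  obtain ⟨p, rfl⟩ := mem_cycSub.1 hy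
  exact mem_cycSub.2 ⟨p, S.aeval_skew p x⟩

theorem cycSub_skew_le_comap (S : SymmSkewPair f T D) (x : V) :
    cycSub T (D x) ≤ (cycSub T x).comap D := by
  refine (S.cycSub_le_comap_skew (D x)).trans (Submodule.comap_mono ?_)
  rw [S.skew_skew]
  exact cycSub_aeval_le T x _

end SymmSkewPair

/-- An orthogonal decomposition `W = F ⊥ N` into nondegenerate `T`-invariant subspaces which are
interchanged by `D`. When `T = φ + φ⁻¹` and `D = φ - φ⁻¹`, the involution `1_F ⊕ (-1)_N` of `W`
conjugates `φ` to `φ⁻¹`. -/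
structure ReversingSplitting (f : LinearMap.BilinForm K V) (T D : Module.End K V)
    (W F N : Submodule K V) : Prop where
  sup_eq : F ⊔ N = W
  perp : Perp f F N
  nondeg_left : NondegOn f F
  nondeg_right : NondegOn f N
  invt_left : Invt T F
  invt_right : Invt T N
  left_le : F ≤ N.comap D
  right_le : N ≤ F.comap D

namespace ReversingSplitting

variable {W W₁ W₂ F F₁ F₂ N N₁ N₂ : Submodule K V}

theorem swap (hf : f.IsSymm) (h : ReversingSplitting f T D W F N) :
    ReversingSplitting f T D W N F :=
  ⟨sup_comm F N ▸ h.sup_eq, h.perp.symm hf, h.nondeg_right, h.nondeg_left, h.invt_right,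
    h.invt_left, h.right_le, h.left_le⟩

theorem nondegOn (hf : f.IsSymm) (h : ReversingSplitting f T D W F N) : NondegOn f W :=
  h.sup_eq ▸ h.nondeg_left.sup hf h.nondeg_right h.perp

theorem left_le_whole (h : ReversingSplitting f T D W F N) : F ≤ W := h.sup_eq ▸ le_sup_left

theorem right_le_whole (h : ReversingSplitting f T D W F N) : N ≤ W := h.sup_eq ▸ le_sup_right

theorem sup (hf : f.IsSymm) (hW : Perp f W₁ W₂) (h₁ : ReversingSplitting f T D W₁ F₁ N₁)
    (h₂ : ReversingSplitting f T D W₂ F₂ N₂) :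
    ReversingSplitting f T D (W₁ ⊔ W₂) (F₁ ⊔ F₂) (N₁ ⊔ N₂) := by
  exact
    { sup_eq := by rw [sup_sup_sup_comm, h₁.sup_eq, h₂.sup_eq]
      perp := (h₁.perp.sup_right (hW.mono h₁.left_le_whole h₂.right_le_whole)).sup_left
        (((hW.symm hf).mono h₂.left_le_whole h₁.right_le_whole).sup_right h₂.perp)
      nondeg_left := h₁.nondeg_left.sup hf h₂.nondeg_left
        (hW.mono h₁.left_le_whole h₂.left_le_whole)
      nondeg_right := h₁.nondeg_right.sup hf h₂.nondeg_right
        (hW.mono h₁.right_le_whole h₂.right_le_whole)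
      invt_left := h₁.invt_left.sup h₂.invt_left
      invt_right := h₁.invt_right.sup h₂.invt_right
      left_le := sup_le_comap_sup h₁.left_le h₂.left_le
      right_le := sup_le_comap_sup h₁.right_le h₂.right_le }

end ReversingSplitting

/-- The subspace generated by `x` under `T` and `D` when these form a `SymmSkewPair`. -/
def cycBlock (T D : Module.End K V) (x : V) : Submodule K V :=
  cycSub T x ⊔ cycSub T (D x)

theorem self_mem_cycBlock (T D : Module.End K V) (x : V) : x ∈ cycBlock T D x :=
  le_sup_left (a := cycSub T x) (self_mem_cycSub T x)

theorem Invt.cycBlock_le {W : Submodule K V} (hT : Invt T W) (hD : Invt D W) (hx : x ∈ W) :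
    cycBlock T D x ≤ W :=
  sup_le (hT.cycSub_le hx) (hT.cycSub_le (hD x hx))

theorem invt_cycBlock (T D : Module.End K V) (x : V) : Invt T (cycBlock T D x) :=
  (invt_cycSub T x).sup (invt_cycSub T (D x))

namespace SymmSkewPair

theorem invt_skew_cycBlock (S : SymmSkewPair f T D) (x : V) : Invt D (cycBlock T D x) :=
  show cycBlock T D x ≤ (cycBlock T D x).comap D from
    (sup_le_comap_sup (S.cycSub_le_comap_skew x) (S.cycSub_skew_le_comap x)).trans
      (Submodule.comap_mono (sup_comm _ _).le)

theorem reversingSplitting_cycBlock (S : SymmSkewPair f T D) (hx : NondegOn f (cycSub T x))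
    (hDx : NondegOn f (cycSub T (D x))) :
    ReversingSplitting f T D (cycBlock T D x) (cycSub T x) (cycSub T (D x)) :=
  ⟨rfl, S.perp_cycSub_skew x, hx, hDx, invt_cycSub T x, invt_cycSub T _,
    S.cycSub_le_comap_skew x, S.cycSub_skew_le_comap x⟩

end SymmSkewPair

end SymmSkewPair

section Signs

variable [Fintype K] [DecidableEq K] [FiniteDimensional K V] {f : LinearMap.BilinForm K V}
  {T D : Module.End K V} {W W₁ W₂ : Submodule K V}

/-- The pairs `((-1) ^ dim N, disc N)` for the splittings `W = F ⊥ N` interchanged by `D`. -/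
def signs (f : LinearMap.BilinForm K V) (T D : Module.End K V) (W : Submodule K V) :
    Set (ℤˣ × ℤˣ) :=
  {s | ∃ F N, ReversingSplitting f T D W F N ∧ s.1 = (-1) ^ finrank K N ∧ s.2 = discSign f N}

theorem mul_mem_signs (hf : f.IsSymm) (hW : Perp f W₁ W₂) {s t : ℤˣ × ℤˣ}
    (hs : s ∈ signs f T D W₁) (ht : t ∈ signs f T D W₂) : s * t ∈ signs f T D (W₁ ⊔ W₂) := by
  obtain ⟨F₁, N₁, h₁, hs₁, hs₂⟩ := hs
  obtain ⟨F₂, N₂, h₂, ht₁, ht₂⟩ := ht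
  have hN : Perp f N₁ N₂ := hW.mono h₁.right_le_whole h₂.right_le_whole
  have hdis := h₁.nondeg_right.disjoint_of_perp hf hN
  refine ⟨F₁ ⊔ F₂, N₁ ⊔ N₂, h₁.sup hf hW h₂, ?_, ?_⟩
  · rw [Prod.fst_mul, hs₁, ht₁, finrank_sup_of_disjoint hdis, pow_add]
  · rw [Prod.snd_mul, Units.val_mul, hs₂, ht₂, discSign_sup hN hdis]

theorem row_mem_signs_sup (hf : f.IsSymm) (hW : Perp f W₁ W₂) {ε δ d : ℤˣ}
    (h₁ : ∀ b, (ε, b) ∈ signs f T D W₁) (h₂ : (δ, d) ∈ signs f T D W₂) (b : ℤˣ) :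
    (ε * δ, b) ∈ signs f T D (W₁ ⊔ W₂) := by
  have := mul_mem_signs hf hW (h₁ (b * d⁻¹)) h₂
  rwa [Prod.mk_mul_mk, inv_mul_cancel_right] at this

/-- The three shapes of `signs f T D W` met when splitting `W` into orthogonal blocks. In the graded
shape, `A` lists the distinct elementary divisors `(X - c) ^ e` of `T`, where `c ^ 2 = 4`,
that belong to unipotent blocks of dimension `2 * e - 1`, and `4 * J` is the dimension
of the remaining blocks; `Y` restricts the elementary divisors that may occur. -/
inductive SignPattern (f : LinearMap.BilinForm K V) (T D : Module.End K V) (W : Submodule K V)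
    (Y : Set (ℕ × K)) : Prop
  | all (h : ∀ s, s ∈ signs f T D W)
  | half (hdim : Even (finrank K W))
      (h : ∀ b, ((-1) ^ (finrank K W / 2), b) ∈ signs f T D W)
  | graded (A : Finset (ℕ × K)) (J : ℕ) (hA : ∀ p ∈ A, p ∈ Y ∧ p.2 ^ 2 = 4)
      (hdim : finrank K W = ∑ p ∈ A, (2 * p.1 - 1) + 4 * J)
      (hpos : (1, (-1) ^ (J + ∑ p ∈ A, p.1 / 2)) ∈ signs f T D W)
      (hneg : A.Nonempty → ∃ b, (-1, b) ∈ signs f T D W)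

namespace SignPattern

variable {Y Y₁ Y₂ : Set (ℕ × K)}

theorem mono (h : SignPattern f T D W Y₁) (hY : Y₁ ⊆ Y₂) : SignPattern f T D W Y₂ := by
  cases h with
  | all h => exact .all h
  | half hdim h => exact .half hdim h
  | graded A J hA hdim hpos hneg =>
    exact .graded A J (fun p hp => ⟨hY (hA p hp).1, (hA p hp).2⟩) hdim hpos hneg

theorem signs_nonempty (h : SignPattern f T D W Y) : (signs f T D W).Nonempty := by
  cases h with
  | all h => exact ⟨1, h 1⟩
  | half _ h => exact ⟨_, h 1⟩
  | graded A J _ _ hpos _ => exact ⟨_, hpos⟩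

theorem nondegOn (hf : f.IsSymm) (h : SignPattern f T D W Y) : NondegOn f W := by
  obtain ⟨_, F, N, hsplit, -⟩ := h.signs_nonempty
  exact hsplit.nondegOn hf

protected theorem bot (f : LinearMap.BilinForm K V) (T D : Module.End K V) (Y : Set (ℕ × K)) :
    SignPattern f T D ⊥ Y := by
  have hinvt : Invt T (⊥ : Submodule K V) := fun x hx => by
    rw [(Submodule.mem_bot K).1 hx, map_zero]
    exact zero_mem _
  have hperp : Perp f (⊥ : Submodule K V) ⊥ := fun x hx _ _ => by
    rw [(Submodule.mem_bot K).1 hx, map_zero, LinearMap.zero_apply]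
  exact .graded ∅ 0 (by simp) (by simp) ⟨⊥, ⊥, ⟨sup_bot_eq _, hperp, nondegOn_bot f, nondegOn_bot f,
    hinvt, hinvt, bot_le, bot_le⟩, by simp, by simp [discSign_bot]⟩ (by simp)

theorem all_sup (hf : f.IsSymm) (hW : Perp f W₁ W₂) (h₁ : ∀ s, s ∈ signs f T D W₁)
    (h₂ : (signs f T D W₂).Nonempty) : SignPattern f T D (W₁ ⊔ W₂) Y := by
  obtain ⟨t, ht⟩ := h₂
  refine .all fun s => ?_
  rw [← inv_mul_cancel_right s t]
  exact mul_mem_signs hf hW (h₁ _) ht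

theorem half_sup_graded (hf : f.IsSymm) (hW : Perp f W₁ W₂)
    (hdim₁ : Even (finrank K W₁)) (h₁ : ∀ b, ((-1) ^ (finrank K W₁ / 2), b) ∈ signs f T D W₁)
    {A : Finset (ℕ × K)} {J : ℕ} (hdim : finrank K ↥(W₁ ⊔ W₂) = finrank K W₁ + finrank K W₂)
    (hdim₂ : finrank K W₂ = ∑ p ∈ A, (2 * p.1 - 1) + 4 * J) {d : ℤˣ}
    (hpos : (1, d) ∈ signs f T D W₂) (hneg : A.Nonempty → ∃ b, (-1, b) ∈ signs f T D W₂) :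
    SignPattern f T D (W₁ ⊔ W₂) Y := by
  have hrow := row_mem_signs_sup hf hW h₁ hpos
  rcases A.eq_empty_or_nonempty with rfl | hA
  · rw [Finset.sum_empty, zero_add] at hdim₂
    have hexp : finrank K ↥(W₁ ⊔ W₂) / 2 = finrank K W₁ / 2 + 2 * J := by omega
    refine .half (hdim ▸ hdim₁.add (hdim₂ ▸ ⟨2 * J, by ring⟩)) ?_
    rwa [hexp, pow_add, Even.neg_one_pow ⟨J, two_mul J⟩]
  · obtain ⟨c, hc⟩ := hneg hA
    refine .all fun ⟨ε, b⟩ => ?_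
    rcases Int.units_eq_one_or (((-1) ^ (finrank K W₁ / 2))⁻¹ * ε) with hε | hε
    · rw [inv_mul_eq_iff_eq_mul.1 hε]
      exact hrow b
    · rw [inv_mul_eq_iff_eq_mul.1 hε]
      exact row_mem_signs_sup hf hW h₁ hc b

theorem half_sup_half (hf : f.IsSymm) (hW : Perp f W₁ W₂)
    (hdim : finrank K ↥(W₁ ⊔ W₂) = finrank K W₁ + finrank K W₂) (hdim₁ : Even (finrank K W₁))
    (h₁ : ∀ b, ((-1) ^ (finrank K W₁ / 2), b) ∈ signs f T D W₁) (hdim₂ : Even (finrank K W₂))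
    (h₂ : ∀ b, ((-1) ^ (finrank K W₂ / 2), b) ∈ signs f T D W₂) :
    SignPattern f T D (W₁ ⊔ W₂) Y := by
  refine .half (hdim ▸ hdim₁.add hdim₂) ?_
  rw [hdim, Nat.add_div_of_dvd_right hdim₁.two_dvd, pow_add]
  exact row_mem_signs_sup hf hW h₁ (h₂ 1)

theorem graded_sup_graded (hf : f.IsSymm) (hW : Perp f W₁ W₂)
    (hdim : finrank K ↥(W₁ ⊔ W₂) = finrank K W₁ + finrank K W₂) {A B : Finset (ℕ × K)} {I J : ℕ}
    (hY : Disjoint Y₁ Y₂) (hA : ∀ p ∈ A, p ∈ Y₁ ∧ p.2 ^ 2 = 4)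
    (hB : ∀ p ∈ B, p ∈ Y₂ ∧ p.2 ^ 2 = 4)
    (hdim₁ : finrank K W₁ = ∑ p ∈ A, (2 * p.1 - 1) + 4 * I)
    (hdim₂ : finrank K W₂ = ∑ p ∈ B, (2 * p.1 - 1) + 4 * J)
    (hpos₁ : (1, (-1) ^ (I + ∑ p ∈ A, p.1 / 2)) ∈ signs f T D W₁)
    (hpos₂ : (1, (-1) ^ (J + ∑ p ∈ B, p.1 / 2)) ∈ signs f T D W₂)
    (hneg₁ : A.Nonempty → ∃ b, (-1, b) ∈ signs f T D W₁)
    (hneg₂ : B.Nonempty → ∃ b, (-1, b) ∈ signs f T D W₂) :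
    SignPattern f T D (W₁ ⊔ W₂) (Y₁ ∪ Y₂) := by
  have hAB : Disjoint A B := Finset.disjoint_left.2 fun p hpA hpB =>
    Set.disjoint_left.1 hY (hA p hpA).1 (hB p hpB).1
  refine .graded (A.disjUnion B hAB) (I + J) (fun p hp => ?_) ?_ ?_ (fun ⟨p, hp⟩ => ?_)
  · rcases Finset.mem_disjUnion.1 hp with hp | hp
    exacts [⟨.inl (hA p hp).1, (hA p hp).2⟩, ⟨.inr (hB p hp).1, (hB p hp).2⟩]
  · rw [hdim, hdim₁, hdim₂, Finset.sum_disjUnion]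
    ring
  · rw [Finset.sum_disjUnion, add_add_add_comm, pow_add, ← one_mul 1]
    exact mul_mem_signs hf hW hpos₁ hpos₂
  · rcases Finset.mem_disjUnion.1 hp with hp | hp
    · obtain ⟨b, hb⟩ := hneg₁ ⟨p, hp⟩
      exact ⟨_, mul_mem_signs hf hW hb hpos₂⟩
    · obtain ⟨b, hb⟩ := hneg₂ ⟨p, hp⟩
      exact ⟨_, mul_mem_signs hf hW hpos₁ hb⟩

theorem sup (hf : f.IsSymm) (hW : Perp f W₁ W₂) (hY : Disjoint Y₁ Y₂)
    (h₁ : SignPattern f T D W₁ Y₁) (h₂ : SignPattern f T D W₂ Y₂) :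
    SignPattern f T D (W₁ ⊔ W₂) (Y₁ ∪ Y₂) := by
  have hdim := finrank_sup_of_disjoint ((h₁.nondegOn hf).disjoint_of_perp hf hW)
  have hW' := hW.symm hf
  have hne₁ := h₁.signs_nonempty
  have hne₂ := h₂.signs_nonempty
  rcases h₁ with h₁ | ⟨hdim₁, h₁⟩ | ⟨A, I, hA, hdim₁, hpos₁, hneg₁⟩
  · exact all_sup hf hW h₁ hne₂
  · rcases h₂ with h₂ | ⟨hdim₂, h₂⟩ | ⟨B, J, -, hdim₂, hpos₂, hneg₂⟩
    · exact sup_comm W₂ W₁ ▸ all_sup hf hW' h₂ hne₁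
    · exact half_sup_half hf hW hdim hdim₁ h₁ hdim₂ h₂
    · exact half_sup_graded hf hW hdim₁ h₁ hdim hdim₂ hpos₂ hneg₂
  · rcases h₂ with h₂ | ⟨hdim₂, h₂⟩ | ⟨B, J, hB, hdim₂, hpos₂, hneg₂⟩
    · exact sup_comm W₂ W₁ ▸ all_sup hf hW' h₂ hne₁
    · rw [sup_comm] at hdim ⊢
      rw [add_comm] at hdim
      exact half_sup_graded hf hW' hdim₂ h₂ hdim hdim₁ hpos₁ hneg₁
    · exact graded_sup_graded hf hW hdim hY hA hB hdim₁ hdim₂ hpos₁ hpos₂ hneg₁ hneg₂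

end SignPattern
end Signs

/-! ### Blocks coprime to `X ^ 2 - 4` -/

section Rescale

variable {f : LinearMap.BilinForm K V} {T D : Module.End K V} {x y : V} {g r w : K[X]} {h : ℕ}

theorem dvd_of_apply_aeval_eq (hx : HasOrder T x g) (hT : f.IsSelfAdjoint T)
    (hnd : NondegOn f (cycSub T x)) (hw : IsCoprime g w)
    (hform : ∀ p : K[X], f (aeval T p y) y = f (aeval T (p * w) x) x) {p : K[X]}
    (hp : ∀ q : K[X], f (aeval T (p * q) y) y = 0) : g ∣ p := by
  refine hw.dvd_of_dvd_mul_right ((hx _).1 (hnd _ (aeval_mem_cycSub T x _) fun z hz => ?_))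
  obtain ⟨q, rfl⟩ := mem_cycSub.1 hz
  rw [apply_aeval_aeval hT, mul_right_comm, ← hform]
  exact hp q

theorem HasOrder.of_apply_aeval_eq (hx : HasOrder T x g) (hT : f.IsSelfAdjoint T)
    (hnd : NondegOn f (cycSub T x)) (hw : IsCoprime g w) (hy : aeval T g y = 0)
    (hform : ∀ p : K[X], f (aeval T p y) y = f (aeval T (p * w) x) x) : HasOrder T y g := by
  refine fun p => ⟨fun hp => dvd_of_apply_aeval_eq hx hT hnd hw hform fun q => ?_,
    aeval_apply_eq_zero_of_dvd hy⟩
  rw [aeval_apply_eq_zero_of_dvd hp (dvd_mul_right p q), map_zero, LinearMap.zero_apply]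

theorem NondegOn.of_apply_aeval_eq (hnd : NondegOn f (cycSub T x)) (hx : HasOrder T x g)
    (hT : f.IsSelfAdjoint T) (hw : IsCoprime g w) (hy : aeval T g y = 0)
    (hform : ∀ p : K[X], f (aeval T p y) y = f (aeval T (p * w) x) x) :
    NondegOn f (cycSub T y) := by
  intro z hz hperp
  obtain ⟨p, rfl⟩ := mem_cycSub.1 hz
  refine aeval_apply_eq_zero_of_dvd hy (dvd_of_apply_aeval_eq hx hT hnd hw hform fun q => ?_)
  rw [← apply_aeval_aeval hT]
  exact hperp _ (aeval_mem_cycSub T y q)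

theorem exists_adjoinRoot_linearMap (l : K[X] →ₗ[K] K) (hl : ∀ p, l (g * p) = 0) :
    ∃ m : AdjoinRoot g →ₗ[K] K, ∀ p, m (AdjoinRoot.mk g p) = l p := by
  refine ⟨((Ideal.span {g}).restrictScalars K).liftQ l fun p hp => ?_, fun p => rfl⟩
  obtain ⟨q, rfl⟩ := Ideal.mem_span_singleton.1 hp
  exact hl q

theorem det_linearMap_mul_basis {L ι : Type*} [Field L] [Algebra K L] [Fintype ι] [DecidableEq ι]
    (b : Basis ι K L) (l : L →ₗ[K] K) (w : L) :
    (Matrix.of fun i j => l (b i * b j * w)).det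
      = Algebra.norm K w * (Matrix.of fun i j => l (b i * b j)).det := by
  rw [Algebra.norm_eq_matrix_det b, mul_comm, ← Matrix.det_mul]
  congr 1
  ext i j
  have hexpand : b j * w = ∑ k, b.repr (w * b j) k • b k := by rw [b.sum_repr, mul_comm]
  simp only [Matrix.mul_apply, Matrix.of_apply, Algebra.leftMulMatrix_eq_repr_mul]
  rw [mul_assoc, hexpand, Finset.mul_sum, map_sum]
  refine Finset.sum_congr rfl fun k _ => ?_
  rw [mul_smul_comm, map_smul, smul_eq_mul, mul_comm]

theorem det_gramMatrix_of_apply_aeval_eq [Fact (Irreducible r)] (hT : f.IsSelfAdjoint T)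
    (hm : r.Monic) (hx : aeval T (r ^ (2 * h + 1)) x = 0)
    (hform : ∀ p : K[X], f (aeval T p y) y = f (aeval T (p * w) x) x) :
    (gramMatrix f fun i : Fin r.natDegree =>
        aeval T (X ^ (i : ℕ) : K[X]) (aeval T (r ^ h) y)).det
      = Algebra.norm K (AdjoinRoot.mk r w) * (gramMatrix f fun i : Fin r.natDegree =>
        aeval T (X ^ (i : ℕ) : K[X]) (aeval T (r ^ h) x)).det := by
  obtain ⟨m, hm'⟩ := exists_adjoinRoot_linearMap (g := r)
    (f.flip x ∘ₗ LinearMap.applyₗ x ∘ₗ (aeval T).toLinearMap ∘ₗ LinearMap.mulLeft K (r ^ (2 * h)))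
    fun p => by
      change f (aeval T (r ^ (2 * h) * (r * p)) x) x = 0
      rw [← mul_assoc, ← pow_succ, aeval_apply_eq_zero_of_dvd hx (dvd_mul_right _ p), map_zero,
        LinearMap.zero_apply]
  have hmk (p : K[X]) : m (AdjoinRoot.mk r p) = f (aeval T (r ^ (2 * h) * p) x) x := hm' p
  let b : Basis (Fin r.natDegree) K (AdjoinRoot r) := (AdjoinRoot.powerBasis' hm).basis
  have hb (i : Fin r.natDegree) : b i = AdjoinRoot.mk r (X ^ (i : ℕ)) := by
    rw [map_pow]
    exact (AdjoinRoot.powerBasis' hm).basis_eq_pow i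
  have hentry (z : V) (i j : Fin r.natDegree) :
      gramMatrix f (fun i : Fin r.natDegree =>
        aeval T (X ^ (i : ℕ) : K[X]) (aeval T (r ^ h) z)) i j
      = f (aeval T (r ^ (2 * h) * (X ^ (i : ℕ) * X ^ (j : ℕ))) z) z := by
    change f (aeval T _ (aeval T _ z)) (aeval T _ (aeval T _ z)) = _
    rw [← aeval_mul_apply, ← aeval_mul_apply, apply_aeval_aeval hT, mul_mul_mul_comm, two_mul,
      pow_add r, mul_comm (r ^ h * r ^ h)]
  convert det_linearMap_mul_basis b m (AdjoinRoot.mk r w) using 2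
  · ext i j
    rw [hentry, hform, Matrix.of_apply, hb, hb, ← map_mul, ← map_mul, hmk, mul_assoc]
  · congr 1
    ext i j
    rw [hentry, Matrix.of_apply, hb, hb, ← map_mul, hmk]

end Rescale

namespace SymmSkewPair

variable {f : LinearMap.BilinForm K V} {T D : Module.End K V} {x : V} {g r : K[X]} {h e : ℕ}

theorem apply_aeval_twist (S : SymmSkewPair f T D) (a b p : K[X]) (x : V) :
    f (aeval T p (aeval T a x + aeval T b (D x))) (aeval T a x + aeval T b (D x))
      = f (aeval T (p * (a ^ 2 - b ^ 2 * (X ^ 2 - C 4))) x) x := by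
  have hcross (q : K[X]) : f (aeval T q (D x)) x = 0 := by
    rw [apply_aeval_left S.selfAdjoint, S.isSymm.eq, S.apply_aeval_skew_self]
  rw [show p * (a ^ 2 - b ^ 2 * (X ^ 2 - C 4))
    = p * a * a - p * b * b * (X ^ 2 - C 4) by ring, map_sub, LinearMap.sub_apply, map_sub,
    LinearMap.sub_apply]
  simp only [map_add, LinearMap.add_apply, ← aeval_mul_apply, apply_aeval_aeval S.selfAdjoint,
    hcross, S.apply_aeval_skew_self, S.apply_aeval_skew_skew, add_zero, zero_add]
  ring

theorem apply_aeval_skew_self_skew (S : SymmSkewPair f T D) (p : K[X]) (x : V) :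
    f (aeval T p (D x)) (D x) = f (aeval T (p * -(X ^ 2 - C 4)) x) x := by
  rw [S.apply_aeval_skew_skew, mul_neg, map_neg, LinearMap.neg_apply, map_neg, LinearMap.neg_apply]

theorem hasOrder_skew (S : SymmSkewPair f T D) (hx : HasOrder T x g)
    (hnd : NondegOn f (cycSub T x)) (hg : IsCoprime g (X ^ 2 - C 4)) : HasOrder T (D x) g :=
  hx.of_apply_aeval_eq S.selfAdjoint hnd hg.neg_right
    (by rw [S.aeval_skew, hx.aeval_eq_zero, map_zero]) fun p => S.apply_aeval_skew_self_skew p x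

theorem nondegOn_cycSub_skew (S : SymmSkewPair f T D) (hx : HasOrder T x g)
    (hnd : NondegOn f (cycSub T x)) (hg : IsCoprime g (X ^ 2 - C 4)) :
    NondegOn f (cycSub T (D x)) :=
  hnd.of_apply_aeval_eq hx S.selfAdjoint hg.neg_right
    (by rw [S.aeval_skew, hx.aeval_eq_zero, map_zero]) fun p => S.apply_aeval_skew_self_skew p x

theorem reversingSplitting_of_isCoprime (S : SymmSkewPair f T D) (hx : HasOrder T x g)
    (hnd : NondegOn f (cycSub T x)) (hg : IsCoprime g (X ^ 2 - C 4)) :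
    ReversingSplitting f T D (cycBlock T D x) (cycSub T (D x)) (cycSub T x) :=
  (S.reversingSplitting_cycBlock hnd (S.nondegOn_cycSub_skew hx hnd hg)).swap S.isSymm

variable [FiniteDimensional K V]

theorem finrank_cycBlock_of_isCoprime (S : SymmSkewPair f T D) (hm : g.Monic)
    (hx : HasOrder T x g) (hnd : NondegOn f (cycSub T x)) (hg : IsCoprime g (X ^ 2 - C 4)) :
    finrank K (cycBlock T D x) = 2 * g.natDegree := by
  rw [cycBlock, finrank_sup_of_disjoint (hnd.disjoint_of_perp S.isSymm (S.perp_cycSub_skew x)),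
    hx.finrank_cycSub hm, (S.hasOrder_skew hx hnd hg).finrank_cycSub hm, two_mul]

variable [Fintype K] [DecidableEq K]

theorem signPattern_of_even (S : SymmSkewPair f T D) (hq : quadraticChar K (-1) = -1)
    (hm : r.Monic) (hx : HasOrder T x (r ^ (2 * h))) (hnd : NondegOn f (cycSub T x))
    (hc : IsCoprime r (X ^ 2 - C 4)) : SignPattern f T D (cycBlock T D x) ∅ := by
  have hrank := hx.finrank_cycSub (hm.pow _)
  refine .graded ∅ (h * r.natDegree) (by simp) ?_
    ⟨_, _, S.reversingSplitting_of_isCoprime hx hnd hc.pow_left, ?_, ?_⟩ (by simp)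
  · rw [S.finrank_cycBlock_of_isCoprime (hm.pow _) hx hnd hc.pow_left, hm.natDegree_pow,
      Finset.sum_empty]
    ring
  · rw [hrank, hm.natDegree_pow, mul_assoc, (even_two_mul _).neg_one_pow]
  · rw [discSign_cycSub_even S.isSymm S.selfAdjoint hm hx hnd, hq]
    simp

end SymmSkewPair

theorem exists_sq_mul_add_sq_mul_eq {L : Type*} [Field L] [Finite L] (h2 : (2 : L) ≠ 0) {a b : L}
    (ha : a ≠ 0) (hb : b ≠ 0) (d : L) : ∃ s t : L, s ^ 2 * a + t ^ 2 * b = d := by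
  have := Fintype.ofFinite L
  have hchar : ringChar L ≠ 2 := fun hL => h2 (mod_cast (ringChar.spec L 2).2 hL.dvd)
  obtain ⟨s, t, hst⟩ := FiniteField.exists_root_sum_quadratic (R := L) (f := C a * X ^ 2 - C d)
    (g := C b * X ^ 2)
    (by rw [degree_sub_C] <;> rw [degree_C_mul ha, degree_X_pow] <;> decide)
    (by rw [degree_C_mul hb, degree_X_pow]; rfl) (FiniteField.odd_card_of_char_ne_two hchar)
  simp only [eval_sub, eval_pow, eval_X, eval_C, eval_mul] at hst
  exact ⟨s, t, by linear_combination hst⟩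

theorem exists_norm_sq_sub_sq_mul_eq [Finite K] {L : Type*} [Field L] [Algebra K L]
    [FiniteDimensional K L] (h2 : (2 : K) ≠ 0) {c : L} (hc : c ≠ 0) (d : K) :
    ∃ a b : L, Algebra.norm K (a ^ 2 - b ^ 2 * c) = d := by
  have : Finite L := Module.finite_of_finite K
  have h2L : (2 : L) ≠ 0 := by
    rw [← map_ofNat (algebraMap K L) 2]
    exact (_root_.map_ne_zero _).2 h2
  obtain ⟨ν, rfl⟩ := FiniteField.norm_surjective K L d
  obtain ⟨a, b, hab⟩ := exists_sq_mul_add_sq_mul_eq h2L one_ne_zero (neg_ne_zero.2 hc) ν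
  exact ⟨a, b, congrArg _ (by linear_combination hab)⟩

namespace SymmSkewPair

variable [FiniteDimensional K V] [Fintype K] [DecidableEq K]
  {f : LinearMap.BilinForm K V} {T D : Module.End K V} {x : V} {r : K[X]} {h e : ℕ}

theorem exists_discSign_eq_neg (S : SymmSkewPair f T D) (hq : quadraticChar K (-1) = -1)
    (hr : Irreducible r) (hm : r.Monic) (hx : HasOrder T x (r ^ (2 * h + 1)))
    (hnd : NondegOn f (cycSub T x)) (hc : IsCoprime r (X ^ 2 - C 4)) :
    ∃ y ∈ cycBlock T D x, HasOrder T y (r ^ (2 * h + 1)) ∧ NondegOn f (cycSub T y) ∧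
      discSign f (cycSub T y) = -discSign f (cycSub T x) := by
  have : Fact (Irreducible r) := ⟨hr⟩
  have : FiniteDimensional K (AdjoinRoot r) := (AdjoinRoot.powerBasis' hm).finite
  have hne : AdjoinRoot.mk r (X ^ 2 - C 4) ≠ 0 := fun hzero =>
    hr.not_isUnit (hc.isUnit_of_dvd' dvd_rfl (AdjoinRoot.mk_eq_zero.1 hzero))
  obtain ⟨α, β, hnorm⟩ := exists_norm_sq_sub_sq_mul_eq (K := K) S.two_ne_zero hne (-1)
  obtain ⟨a, rfl⟩ := AdjoinRoot.mk_surjective α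
  obtain ⟨b, rfl⟩ := AdjoinRoot.mk_surjective β
  rw [← map_pow, ← map_pow, ← map_mul, ← map_sub] at hnorm
  have hform (p : K[X]) := S.apply_aeval_twist a b p x
  set w : K[X] := a ^ 2 - b ^ 2 * (X ^ 2 - C 4)
  set y : V := aeval T a x + aeval T b (D x)
  have hw : IsCoprime (r ^ (2 * h + 1)) w := by
    refine IsCoprime.pow_left (hr.coprime_iff_not_dvd.2 fun hdvd => ?_)
    rw [AdjoinRoot.mk_eq_zero.2 hdvd, Algebra.norm_zero] at hnorm
    exact one_ne_zero (neg_eq_zero.1 hnorm.symm)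
  have hy : aeval T (r ^ (2 * h + 1)) y = 0 := by
    rw [map_add, ← aeval_mul_apply, ← aeval_mul_apply, S.aeval_skew,
      aeval_apply_eq_zero_of_dvd hx.aeval_eq_zero (dvd_mul_right _ a),
      aeval_apply_eq_zero_of_dvd hx.aeval_eq_zero (dvd_mul_right _ b), map_zero, add_zero]
  have hyord := hx.of_apply_aeval_eq S.selfAdjoint hnd hw hy hform
  have hynd := hnd.of_apply_aeval_eq hx S.selfAdjoint hw hy hform
  refine ⟨y, Submodule.add_mem_sup (aeval_mem_cycSub T x a) (aeval_mem_cycSub T (D x) b),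
    hyord, hynd, ?_⟩
  rw [discSign_cycSub_odd S.isSymm S.selfAdjoint hr hm hyord hynd,
    discSign_cycSub_odd S.isSymm S.selfAdjoint hr hm hx hnd,
    det_gramMatrix_of_apply_aeval_eq S.selfAdjoint hm hx.aeval_eq_zero hform, hnorm, map_mul, hq,
    neg_one_mul, neg_mul]

theorem signPattern_of_odd (S : SymmSkewPair f T D) (hq : quadraticChar K (-1) = -1)
    (hr : Irreducible r) (hm : r.Monic) (hx : HasOrder T x (r ^ (2 * h + 1)))
    (hnd : NondegOn f (cycSub T x)) (hc : IsCoprime r (X ^ 2 - C 4)) :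
    SignPattern f T D (cycBlock T D x) ∅ := by
  have hrank {z : V} (hz : HasOrder T z (r ^ (2 * h + 1))) (hznd : NondegOn f (cycSub T z)) :=
    S.finrank_cycBlock_of_isCoprime (hm.pow _) hz hznd hc.pow_left
  obtain ⟨y, hmem, hy, hynd, hdisc⟩ := S.exists_discSign_eq_neg hq hr hm hx hnd hc
  have hblock : cycBlock T D y = cycBlock T D x :=
    Submodule.eq_of_le_of_finrank_eq
      ((invt_cycBlock T D x).cycBlock_le (S.invt_skew_cycBlock x) hmem)
      ((hrank hy hynd).trans (hrank hx hnd).symm)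
  have hsplit := S.reversingSplitting_of_isCoprime hy hynd hc.pow_left
  rw [hblock] at hsplit
  obtain ⟨s, hs⟩ := hnd.exists_units_discSign_eq
  refine .half (hrank hx hnd ▸ even_two_mul _) fun b => ?_
  rw [hrank hx hnd, Nat.mul_div_cancel_left _ two_pos]
  rcases eq_or_ne b s with rfl | hb
  · exact ⟨_, _, S.reversingSplitting_of_isCoprime hx hnd hc.pow_left,
      by rw [hx.finrank_cycSub (hm.pow _)], hs⟩
  · exact ⟨_, _, hsplit, by rw [hy.finrank_cycSub (hm.pow _)],
      by rw [hdisc, ← hs, Int.units_ne_iff_eq_neg.1 hb, Units.val_neg]⟩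

theorem signPattern_of_isCoprime (S : SymmSkewPair f T D) (hq : quadraticChar K (-1) = -1)
    (hr : Irreducible r) (hm : r.Monic) (hx : HasOrder T x (r ^ e))
    (hnd : NondegOn f (cycSub T x)) (hc : IsCoprime r (X ^ 2 - C 4)) :
    SignPattern f T D (cycBlock T D x) ∅ := by
  obtain ⟨h, rfl | rfl⟩ := Nat.even_or_odd' e
  · exact S.signPattern_of_even hq hm hx hnd hc
  · exact S.signPattern_of_odd hq hr hm hx hnd hc

end SymmSkewPair

/-! ### Hyperbolic blocks at the eigenvalues `±2` -/

section Duality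

theorem exists_apply_mul_eq {A : Type*} [CommRing A] [Algebra K A] [FiniteDimensional K A]
    {l : A →ₗ[K] K} (hl : ∀ a, (∀ b, l (a * b) = 0) → a = 0) (m : A →ₗ[K] K) :
    ∃ a, ∀ b, l (b * a) = m b := by
  let φ : A →ₗ[K] Module.Dual K A := (LinearMap.mul K A).compr₂ l
  have hφ : Function.Injective φ :=
    (injective_iff_map_eq_zero φ).2 fun a ha => hl a fun b => LinearMap.congr_fun ha b
  obtain ⟨a, ha⟩ :=
    (LinearMap.injective_iff_surjective_of_finrank_eq_finrank Subspace.dual_finrank_eq.symm).1 hφ m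
  exact ⟨a, fun b => mul_comm a b ▸ LinearMap.congr_fun ha b⟩

variable {f : LinearMap.BilinForm K V} {T : Module.End K V} {u v y : V} {r : K[X]} {e : ℕ}

theorem exists_apply_aeval_eq (hr : Irreducible r) (hm : r.Monic) (hu : aeval T (r ^ e) u = 0)
    (hv : aeval T (r ^ e) v = 0) (huy : f (aeval T (r ^ (e - 1)) u) y ≠ 0) :
    ∃ q : K[X], ∀ p : K[X], f (aeval T (p * q) u) y = f (aeval T p v) y := by
  have : FiniteDimensional K (AdjoinRoot (r ^ e)) := (AdjoinRoot.powerBasis' (hm.pow e)).finite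
  have hfunctional {z : V} (hz : aeval T (r ^ e) z = 0) : ∃ l : AdjoinRoot (r ^ e) →ₗ[K] K,
      ∀ p, l (AdjoinRoot.mk (r ^ e) p) = f (aeval T p z) y :=
    exists_adjoinRoot_linearMap (f.flip y ∘ₗ LinearMap.applyₗ z ∘ₗ (aeval T).toLinearMap)
      fun p => by
        change f (aeval T (r ^ e * p) z) y = 0
        rw [aeval_apply_eq_zero_of_dvd hz (dvd_mul_right _ p), map_zero, LinearMap.zero_apply]
  obtain ⟨l, hl⟩ := hfunctional hu
  obtain ⟨m, hm⟩ := hfunctional hv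
  have hnondeg (a : AdjoinRoot (r ^ e)) (ha : ∀ b, l (a * b) = 0) : a = 0 := by
    obtain ⟨p, rfl⟩ := AdjoinRoot.mk_surjective a
    rw [AdjoinRoot.mk_eq_zero]
    by_contra hdvd
    obtain ⟨s, t, hst⟩ := pow_pred_mem_span_of_not_dvd hr hdvd
    refine huy ?_
    have hps := ha (AdjoinRoot.mk _ s)
    rw [← map_mul, hl] at hps
    rw [hst, mul_comm s, aeval_add_apply, map_add, LinearMap.add_apply, hps,
      aeval_apply_eq_zero_of_dvd hu (dvd_mul_left _ t), map_zero, LinearMap.zero_apply, add_zero]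
  obtain ⟨a, ha⟩ := exists_apply_mul_eq hnondeg m
  obtain ⟨q, rfl⟩ := AdjoinRoot.mk_surjective a
  exact ⟨q, fun p => by rw [← hl, ← hm, ← ha, map_mul]⟩

end Duality

section HyperbolicPair

variable {f : LinearMap.BilinForm K V} {T : Module.End K V} {u v x : V} {c : K} {n : ℕ}

theorem aeval_mul_X_sub_C_pow (hx : aeval T ((X - C c) ^ (n + 1)) x = 0) (p : K[X]) :
    aeval T (p * (X - C c) ^ n) x = p.eval c • aeval T ((X - C c) ^ n) x := by
  obtain ⟨s, hs⟩ := X_sub_C_dvd_sub_C_eval (a := c) (p := p)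
  rw [show p * (X - C c) ^ n = C (p.eval c) * (X - C c) ^ n + (X - C c) ^ (n + 1) * s by
    linear_combination (X - C c) ^ n * hs, aeval_add_apply, aeval_C_mul_apply,
    aeval_apply_eq_zero_of_dvd hx (dvd_mul_right _ s), add_zero]

theorem pow_dvd_of_apply_eq_zero (hf : f.IsSymm) (hT : f.IsSelfAdjoint T)
    (hu : aeval T ((X - C c) ^ (n + 1)) u = 0) (hv : aeval T ((X - C c) ^ (n + 1)) v = 0)
    (huv : f (aeval T ((X - C c) ^ n) u) v ≠ 0) (hvv : f (aeval T ((X - C c) ^ n) v) v = 0)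
    {p q : K[X]} (hpu : ∀ t : K[X], f (aeval T p u + aeval T q v) (aeval T t u) = 0)
    (hpv : ∀ t : K[X], f (aeval T p u + aeval T q v) (aeval T t v) = 0) :
    ∀ j ≤ n + 1, (X - C c) ^ j ∣ p ∧ (X - C c) ^ j ∣ q
  | 0, _ => by simp
  | j + 1, hj => by
    obtain ⟨⟨p', hp⟩, ⟨q', hq⟩⟩ :=
      pow_dvd_of_apply_eq_zero hf hT hu hv huv hvv hpu hpv j (by omega)
    have hshift (s : K[X]) : (X - C c) ^ j * s * (X - C c) ^ (n - j) = s * (X - C c) ^ n := by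
      rw [mul_right_comm, ← pow_add, Nat.add_sub_cancel' (by omega), mul_comm]
    have hsocle (z : V) (hz : f (aeval T p u + aeval T q v) (aeval T ((X - C c) ^ (n - j)) z) = 0) :
        p'.eval c * f (aeval T ((X - C c) ^ n) u) z
          + q'.eval c * f (aeval T ((X - C c) ^ n) v) z = 0 := by
      rwa [map_add, LinearMap.add_apply, apply_aeval_aeval hT, apply_aeval_aeval hT, hp, hq, hshift,
        hshift, aeval_mul_X_sub_C_pow hu, aeval_mul_X_sub_C_pow hv, map_smul, map_smul,
        LinearMap.smul_apply, LinearMap.smul_apply] at hz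
    have hpc : p'.eval c = 0 := by
      have h := hsocle v (hpv _)
      rw [hvv, mul_zero, add_zero] at h
      exact (mul_eq_zero.1 h).resolve_right huv
    have hqc : q'.eval c = 0 := by
      have h := hsocle u (hpu _)
      rw [hpc, zero_mul, zero_add, apply_aeval_left hT, hf.eq] at h
      exact (mul_eq_zero.1 h).resolve_right huv
    rw [hp, hq, pow_succ]
    exact ⟨mul_dvd_mul_left _ (dvd_iff_isRoot.2 hpc), mul_dvd_mul_left _ (dvd_iff_isRoot.2 hqc)⟩

theorem nondegOn_cycSub_sup (hf : f.IsSymm) (hT : f.IsSelfAdjoint T)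
    (hu : aeval T ((X - C c) ^ (n + 1)) u = 0) (hv : aeval T ((X - C c) ^ (n + 1)) v = 0)
    (huv : f (aeval T ((X - C c) ^ n) u) v ≠ 0) (hvv : f (aeval T ((X - C c) ^ n) v) v = 0) :
    NondegOn f (cycSub T u ⊔ cycSub T v) := by
  intro z hz hperp
  obtain ⟨_, hp, _, hq, rfl⟩ := Submodule.mem_sup.1 hz
  obtain ⟨p, rfl⟩ := mem_cycSub.1 hp
  obtain ⟨q, rfl⟩ := mem_cycSub.1 hq
  obtain ⟨hdvd, hdvd'⟩ := pow_dvd_of_apply_eq_zero hf hT hu hv huv hvv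
    (fun t => hperp _ (Submodule.mem_sup_left (aeval_mem_cycSub T u t)))
    (fun t => hperp _ (Submodule.mem_sup_right (aeval_mem_cycSub T v t))) _ le_rfl
  rw [aeval_apply_eq_zero_of_dvd hu hdvd, aeval_apply_eq_zero_of_dvd hv hdvd', add_zero]

theorem disjoint_cycSub (hf : f.IsSymm) (hT : f.IsSelfAdjoint T)
    (hu : aeval T ((X - C c) ^ (n + 1)) u = 0) (hv : aeval T ((X - C c) ^ (n + 1)) v = 0)
    (huv : f (aeval T ((X - C c) ^ n) u) v ≠ 0) (hvv : f (aeval T ((X - C c) ^ n) v) v = 0) :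
    Disjoint (cycSub T u) (cycSub T v) := by
  refine Submodule.disjoint_def.2 fun z hz hz' => ?_
  obtain ⟨p, rfl⟩ := mem_cycSub.1 hz
  obtain ⟨q, hq⟩ := mem_cycSub.1 hz'
  have hzero : aeval T p u + aeval T (-q) v = 0 := by
    rw [map_neg, LinearMap.neg_apply, hq, add_neg_cancel]
  have hperp (w : V) : f (aeval T p u + aeval T (-q) v) w = 0 := by
    rw [hzero, map_zero, LinearMap.zero_apply]
  exact aeval_apply_eq_zero_of_dvd hu
    (pow_dvd_of_apply_eq_zero hf hT hu hv huv hvv (fun _ => hperp _) (fun _ => hperp _) _ le_rfl).1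

theorem hasOrder_X_sub_C_pow_of_apply_ne_zero (hu : aeval T ((X - C c) ^ (n + 1)) u = 0)
    (huv : f (aeval T ((X - C c) ^ n) u) v ≠ 0) : HasOrder T u ((X - C c) ^ (n + 1)) :=
  hasOrder_pow (irreducible_X_sub_C c) hu fun hzero => huv (by
    rw [Nat.add_sub_cancel] at hzero
    rw [hzero, map_zero, LinearMap.zero_apply])

theorem HasOrder.finrank_cycSub_X_sub_C_pow (hx : HasOrder T x ((X - C c) ^ n)) :
    finrank K (cycSub T x) = n := by
  rw [hx.finrank_cycSub ((monic_X_sub_C c).pow n), (monic_X_sub_C c).natDegree_pow,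
    natDegree_X_sub_C, mul_one]

variable [FiniteDimensional K V]

theorem finrank_cycSub_sup (hf : f.IsSymm) (hT : f.IsSelfAdjoint T)
    (hu : aeval T ((X - C c) ^ (n + 1)) u = 0) (hv : aeval T ((X - C c) ^ (n + 1)) v = 0)
    (huv : f (aeval T ((X - C c) ^ n) u) v ≠ 0) (hvv : f (aeval T ((X - C c) ^ n) v) v = 0) :
    finrank K ↥(cycSub T u ⊔ cycSub T v) = 2 * (n + 1) := by
  have hvu : f (aeval T ((X - C c) ^ n) v) u ≠ 0 := by rwa [apply_aeval_left hT, hf.eq]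
  rw [finrank_sup_of_disjoint (disjoint_cycSub hf hT hu hv huv hvv),
    (hasOrder_X_sub_C_pow_of_apply_ne_zero hu huv).finrank_cycSub_X_sub_C_pow,
    (hasOrder_X_sub_C_pow_of_apply_ne_zero hv hvu).finrank_cycSub_X_sub_C_pow, two_mul]

variable [Fintype K] [DecidableEq K]

theorem discSign_cycSub_sup (hf : f.IsSymm) (hT : f.IsSelfAdjoint T)
    (hu : aeval T ((X - C c) ^ (n + 1)) u = 0) (hv : aeval T ((X - C c) ^ (n + 1)) v = 0)
    (huv : f (aeval T ((X - C c) ^ n) u) v ≠ 0) (hvv : f (aeval T ((X - C c) ^ n) v) v = 0) :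
    discSign f (cycSub T u ⊔ cycSub T v) = quadraticChar K (-1) ^ (n + 1) := by
  obtain ⟨a, b, hab, ha, hb⟩ : ∃ a b, a + b = n + 1 ∧ n + 1 ≤ 2 * a ∧ n ≤ 2 * b :=
    ⟨n + 1 - (n + 1) / 2, (n + 1) / 2, by omega, by omega, by omega⟩
  set r : K[X] := X - C c
  have hvu : f (aeval T (r ^ n) v) u ≠ 0 := by rwa [apply_aeval_left hT, hf.eq]
  have hu' := hasOrder_X_sub_C_pow_of_apply_ne_zero hu huv
  have hv' := hasOrder_X_sub_C_pow_of_apply_ne_zero hv hvu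
  have hle_u := cycSub_aeval_le T u (r ^ a)
  have hle_v := cycSub_aeval_le T v (r ^ b)
  have hrank :
      finrank K ↥(cycSub T (aeval T (r ^ a) u) ⊔ cycSub T (aeval T (r ^ b) v)) = n + 1 := by
    rw [finrank_sup_of_disjoint ((disjoint_cycSub hf hT hu hv huv hvv).mono hle_u hle_v)]
    rw [← hab, pow_add] at hu'
    rw [← hab, add_comm, pow_add] at hv'
    rw [(hu'.aeval_apply ((monic_X_sub_C c).pow a).ne_zero).finrank_cycSub_X_sub_C_pow,
      (hv'.aeval_apply ((monic_X_sub_C c).pow b).ne_zero).finrank_cycSub_X_sub_C_pow, add_comm, hab]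
  have hperp_uv : Perp f (cycSub T (aeval T (r ^ a) u)) (cycSub T (aeval T (r ^ b) v)) :=
    perp_cycSub hT fun s => by
      rw [← aeval_mul_apply, apply_aeval_aeval hT, mul_assoc, ← pow_add, hab,
        aeval_apply_eq_zero_of_dvd hu (dvd_mul_left _ s), map_zero, LinearMap.zero_apply]
  have hperp_v : Perp f (cycSub T (aeval T (r ^ b) v)) (cycSub T (aeval T (r ^ b) v)) :=
    perp_cycSub hT fun s => by
      rw [← aeval_mul_apply, apply_aeval_aeval hT, mul_assoc, ← pow_add, ← two_mul,
        ← Nat.sub_add_cancel hb, pow_add, ← mul_assoc, aeval_mul_X_sub_C_pow hv, map_smul,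
        LinearMap.smul_apply, hvv, smul_zero]
  rw [← hrank]
  refine discSign_of_isotropic_half hf (nondegOn_cycSub_sup hf hT hu hv huv hvv)
    (sup_le_sup hle_u hle_v) (Perp.sup_left (Perp.sup_right ?_ hperp_uv)
      ((hperp_uv.symm hf).sup_right hperp_v)) ?_
  · refine hu'.perp_cycSub_aeval hT ?_
    rw [← pow_add, ← two_mul]
    exact pow_dvd_pow r ha
  · rw [hrank, finrank_cycSub_sup hf hT hu hv huv hvv]

end HyperbolicPair

namespace SymmSkewPair

variable {f : LinearMap.BilinForm K V} {T D : Module.End K V} {x y : V} {c : K} {n : ℕ}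

theorem X_sub_C_dvd (hc : c ^ 2 = 4) : (X - C c : K[X]) ∣ X ^ 2 - C 4 :=
  ⟨X + C c, by rw [← hc, C_pow]; ring⟩

theorem aeval_skew_eq_zero (S : SymmSkewPair f T D) {p : K[X]} (hx : aeval T p x = 0) :
    aeval T p (D x) = 0 := by
  rw [S.aeval_skew, hx, map_zero]

theorem apply_skew_skew_eq_zero (S : SymmSkewPair f T D) (hc : c ^ 2 = 4)
    (hx : aeval T ((X - C c) ^ (n + 1)) x = 0) (y : V) :
    f (aeval T ((X - C c) ^ n) (D x)) (D y) = 0 := by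
  have hdvd : (X - C c) ^ (n + 1) ∣ (X - C c) ^ n * (X ^ 2 - C 4) :=
    pow_succ (X - C c) n ▸ mul_dvd_mul_left _ (X_sub_C_dvd hc)
  rw [S.apply_aeval_skew_skew, aeval_apply_eq_zero_of_dvd hx hdvd, map_zero, LinearMap.zero_apply,
    neg_zero]

theorem exists_add_aeval_skew_perp (S : SymmSkewPair f T D) (hc : c ^ 2 = 4)
    (hx : aeval T ((X - C c) ^ (n + 1)) x = 0)
    (hxy : f (aeval T ((X - C c) ^ n) (D x)) y ≠ 0) :
    ∃ q : K[X], (∀ p : K[X], f (aeval T p x) (y + aeval T q (D y)) = 0) ∧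
      f (aeval T ((X - C c) ^ n) (D x)) (y + aeval T q (D y)) ≠ 0 := by
  obtain ⟨q, hq⟩ := exists_apply_aeval_eq (irreducible_X_sub_C c) (monic_X_sub_C c)
    (e := n + 1) (S.aeval_skew_eq_zero hx) hx hxy
  refine ⟨q, fun p => ?_, ?_⟩
  · have hskew : f (aeval T p x) (aeval T q (D y)) = -f (aeval T (p * q) (D x)) y := by
      rw [apply_aeval_aeval S.selfAdjoint, S.aeval_skew, S.skew_apply_left, neg_neg]
    rw [map_add, hskew, hq, add_neg_cancel]
  · rwa [map_add, S.aeval_skew q, S.apply_skew_skew_eq_zero hc hx, add_zero]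

theorem reversingSplitting_hyperbolic (S : SymmSkewPair f T D) (hc : c ^ 2 = 4)
    (hx : aeval T ((X - C c) ^ (n + 1)) x = 0) (hy : aeval T ((X - C c) ^ (n + 1)) y = 0)
    (hxDy : f (aeval T ((X - C c) ^ n) x) (D y) ≠ 0)
    (hyDx : f (aeval T ((X - C c) ^ n) y) (D x) ≠ 0) (hxy : ∀ p : K[X], f (aeval T p x) y = 0) :
    ReversingSplitting f T D (cycBlock T D x ⊔ cycBlock T D y)
      (cycSub T x ⊔ cycSub T (D y)) (cycSub T y ⊔ cycSub T (D x)) where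
  sup_eq := by
    rw [cycBlock, cycBlock, sup_comm (cycSub T y), sup_sup_sup_comm, sup_comm (cycSub T (D y))]
  perp := by
    refine Perp.sup_left (Perp.sup_right (perp_cycSub S.selfAdjoint hxy) (S.perp_cycSub_skew x))
      (Perp.sup_right ((S.perp_cycSub_skew y).symm S.isSymm) ?_)
    refine Perp.symm S.isSymm (perp_cycSub S.selfAdjoint fun p => ?_)
    rw [S.apply_aeval_skew_skew, hxy, neg_zero]
  nondeg_left := nondegOn_cycSub_sup S.isSymm S.selfAdjoint hx (S.aeval_skew_eq_zero hy) hxDy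
    (S.apply_skew_skew_eq_zero hc hy y)
  nondeg_right := nondegOn_cycSub_sup S.isSymm S.selfAdjoint hy (S.aeval_skew_eq_zero hx) hyDx
    (S.apply_skew_skew_eq_zero hc hx x)
  invt_left := (invt_cycSub T x).sup (invt_cycSub T (D y))
  invt_right := (invt_cycSub T y).sup (invt_cycSub T (D x))
  left_le := by
    rw [sup_comm (cycSub T y)]
    exact sup_le_comap_sup (S.cycSub_le_comap_skew x) (S.cycSub_skew_le_comap y)
  right_le := by
    rw [sup_comm (cycSub T x)]
    exact sup_le_comap_sup (S.cycSub_le_comap_skew y) (S.cycSub_skew_le_comap x)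

variable [FiniteDimensional K V] [Fintype K] [DecidableEq K]

theorem signPattern_hyperbolic (S : SymmSkewPair f T D) (hq : quadraticChar K (-1) = -1)
    (hc : c ^ 2 = 4) (hx : aeval T ((X - C c) ^ (n + 1)) x = 0)
    (hy : aeval T ((X - C c) ^ (n + 1)) y = 0) (hDxy : f (aeval T ((X - C c) ^ n) (D x)) y ≠ 0)
    (hxy : ∀ p : K[X], f (aeval T p x) y = 0) :
    SignPattern f T D (cycBlock T D x ⊔ cycBlock T D y) ∅ := by
  have hxDy : f (aeval T ((X - C c) ^ n) x) (D y) ≠ 0 := by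
    rwa [← neg_ne_zero, ← S.skew_apply_left, ← S.aeval_skew]
  have hyDx : f (aeval T ((X - C c) ^ n) y) (D x) ≠ 0 := by
    rwa [apply_aeval_left S.selfAdjoint, S.isSymm.eq]
  have hsplit := S.reversingSplitting_hyperbolic hc hx hy hxDy hyDx hxy
  have hleft := finrank_cycSub_sup S.isSymm S.selfAdjoint hx (S.aeval_skew_eq_zero hy) hxDy
    (S.apply_skew_skew_eq_zero hc hy y)
  have hright := finrank_cycSub_sup S.isSymm S.selfAdjoint hy (S.aeval_skew_eq_zero hx) hyDx
    (S.apply_skew_skew_eq_zero hc hx x)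
  refine .graded ∅ (n + 1) (by simp) ?_ ⟨_, _, hsplit, ?_, ?_⟩ (by simp)
  · rw [← hsplit.sup_eq, finrank_sup_of_disjoint
      (hsplit.nondeg_left.disjoint_of_perp S.isSymm hsplit.perp), hleft, hright, Finset.sum_empty]
    ring
  · rw [hright, (even_two_mul _).neg_one_pow]
  · rw [discSign_cycSub_sup S.isSymm S.selfAdjoint hy (S.aeval_skew_eq_zero hx) hyDx
      (S.apply_skew_skew_eq_zero hc hx x), hq]
    simp

end SymmSkewPair

/-! ### Unipotent blocks at the eigenvalues `±2` -/

section Unipotent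

variable {f : LinearMap.BilinForm K V} {T D : Module.End K V} {x y z v : V} {c : K} {n h : ℕ}
  {U W : Submodule K V}

/-- The vectors killed by `(T - c) ^ (n + 1)` and by `(T - c) ^ n ∘ D`. -/
noncomputable def unipotentKer (T D : Module.End K V) (c : K) (n : ℕ) : Submodule K V :=
  LinearMap.ker (aeval T ((X - C c) ^ (n + 1))) ⊓ LinearMap.ker (aeval T ((X - C c) ^ n) ∘ₗ D)

/-- A vector generating a nondegenerate `cycBlock` of dimension `2 * n + 1`. On such a block of
`T = φ + φ⁻¹`, `D = φ - φ⁻¹` with `c = ±2`, the isometry `± φ` is unipotent. -/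
structure IsUnipotentVector (f : LinearMap.BilinForm K V) (T D : Module.End K V) (c : K) (n : ℕ)
    (x : V) : Prop where
  mem : x ∈ unipotentKer T D c n
  apply_ne_zero : f (aeval T ((X - C c) ^ n) x) x ≠ 0

theorem mem_unipotentKer : v ∈ unipotentKer T D c n ↔
    aeval T ((X - C c) ^ (n + 1)) v = 0 ∧ aeval T ((X - C c) ^ n) (D v) = 0 :=
  Iff.rfl

theorem invt_unipotentKer (S : SymmSkewPair f T D) (c : K) (n : ℕ) :
    Invt T (unipotentKer T D c n) := by
  have hcomm (p : K[X]) (v : V) : aeval T p (T v) = T (aeval T p v) := by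
    have h := aeval_mul_apply T p X v
    rwa [mul_comm, aeval_mul_apply, aeval_X, eq_comm] at h
  intro v hv
  obtain ⟨hv, hDv⟩ := mem_unipotentKer.1 hv
  refine mem_unipotentKer.2 ⟨by rw [hcomm, hv, map_zero], ?_⟩
  rw [← Module.End.mul_apply D, ← S.commute.eq, Module.End.mul_apply, hcomm, hDv, map_zero]

theorem invt_skew_unipotentKer (S : SymmSkewPair f T D) (hc : c ^ 2 = 4) (n : ℕ) :
    Invt D (unipotentKer T D c n) := by
  intro v hv
  have hzero := (mem_unipotentKer.1 hv).1
  refine mem_unipotentKer.2 ⟨S.aeval_skew_eq_zero hzero, ?_⟩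
  rw [S.skew_skew, ← aeval_mul_apply]
  refine aeval_apply_eq_zero_of_dvd hzero ?_
  rw [pow_succ]
  exact mul_dvd_mul_left _ (SymmSkewPair.X_sub_C_dvd hc)

theorem SymmSkewPair.two_mul_ne_zero (S : SymmSkewPair f T D) (hc : c ^ 2 = 4) : 2 * c ≠ 0 := by
  have h2 := S.two_ne_zero
  refine mul_ne_zero h2 ?_
  rintro rfl
  exact mul_ne_zero h2 h2 (by linear_combination -hc)

theorem SymmSkewPair.apply_pow_skew_skew (S : SymmSkewPair f T D) (hc : c ^ 2 = 4)
    (hx : aeval T ((X - C c) ^ (n + 2)) x = 0) :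
    f (aeval T ((X - C c) ^ n) (D x)) (D x) = -(2 * c) * f (aeval T ((X - C c) ^ (n + 1)) x) x := by
  rw [S.apply_aeval_skew_skew, ← hc, show (X - C c) ^ n * (X ^ 2 - C (c ^ 2))
    = (X + C c) * (X - C c) ^ (n + 1) by rw [C_pow]; ring, aeval_mul_X_sub_C_pow hx, map_smul,
    LinearMap.smul_apply, eval_add, eval_X, eval_C, smul_eq_mul]
  ring

theorem SymmSkewPair.invt_inf_orthogonal (S : SymmSkewPair f T D) (hW : Invt T W) (hU : Invt T U) :
    Invt T (W ⊓ f.orthogonal U) :=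
  fun x hx => ⟨hW x hx.1, fun y hy => (S.selfAdjoint y x).symm.trans (hx.2 _ (hU y hy))⟩

theorem SymmSkewPair.invt_skew_inf_orthogonal (S : SymmSkewPair f T D) (hW : Invt D W)
    (hU : Invt D U) : Invt D (W ⊓ f.orthogonal U) :=
  fun x hx => ⟨hW x hx.1, fun y hy => neg_eq_zero.1
    ((S.skew_apply_left y x).symm.trans (hx.2 _ (hU y hy)))⟩

theorem SymmSkewPair.discSign_cycSub_odd_X_sub_C [FiniteDimensional K V] [Fintype K]
    [DecidableEq K] (S : SymmSkewPair f T D)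
    (hx : HasOrder T x ((X - C c) ^ (2 * h + 1))) (hnd : NondegOn f (cycSub T x)) :
    discSign f (cycSub T x)
      = quadraticChar K (f (aeval T ((X - C c) ^ (2 * h)) x) x) * quadraticChar K (-1) ^ h := by
  have hdet {m : ℕ} (hm : m = 1) (w : V) :
      (gramMatrix f fun i : Fin m => aeval T (X ^ (i : ℕ) : K[X]) w).det = f w w := by
    subst hm
    simp [gramMatrix]
  rw [discSign_cycSub_odd S.isSymm S.selfAdjoint (irreducible_X_sub_C c) (monic_X_sub_C c) hx hnd,
    hdet (natDegree_X_sub_C c), natDegree_X_sub_C, mul_one, apply_aeval_aeval S.selfAdjoint,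
    ← pow_add, two_mul]

namespace IsUnipotentVector

theorem aeval_eq_zero (hx : IsUnipotentVector f T D c n x) :
    aeval T ((X - C c) ^ (n + 1)) x = 0 := hx.mem.1

theorem aeval_skew_eq_zero (hx : IsUnipotentVector f T D c n x) :
    aeval T ((X - C c) ^ n) (D x) = 0 := hx.mem.2

theorem hasOrder (hx : IsUnipotentVector f T D c n x) : HasOrder T x ((X - C c) ^ (n + 1)) :=
  hasOrder_X_sub_C_pow_of_apply_ne_zero hx.aeval_eq_zero hx.apply_ne_zero

theorem nondegOn (S : SymmSkewPair f T D) (hx : IsUnipotentVector f T D c n x) :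
    NondegOn f (cycSub T x) :=
  nondegOn_cycSub S.selfAdjoint (irreducible_X_sub_C c) (t := 1) hx.aeval_eq_zero
    (by rw [one_mul]; exact hx.apply_ne_zero)

theorem hasOrder_skew_and_nondegOn (S : SymmSkewPair f T D) (hc : c ^ 2 = 4)
    (hx : IsUnipotentVector f T D c n x) :
    HasOrder T (D x) ((X - C c) ^ n) ∧ NondegOn f (cycSub T (D x)) := by
  have hzero := hx.aeval_skew_eq_zero
  cases n with
  | zero =>
    rw [pow_zero, map_one, Module.End.one_apply] at hzero
    have hbot : cycSub T (0 : V) = ⊥ := by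
      refine eq_bot_iff.2 fun y hy => ?_
      obtain ⟨p, rfl⟩ := mem_cycSub.1 hy
      rw [map_zero]
      exact zero_mem _
    rw [hzero, hbot]
    exact ⟨fun p => by simp, nondegOn_bot f⟩
  | succ n =>
    have hne : f (aeval T ((X - C c) ^ n) (D x)) (D x) ≠ 0 := by
      rw [S.apply_pow_skew_skew hc hx.aeval_eq_zero]
      exact mul_ne_zero (neg_ne_zero.2 (S.two_mul_ne_zero hc)) hx.apply_ne_zero
    exact ⟨hasOrder_X_sub_C_pow_of_apply_ne_zero hzero hne,
      nondegOn_cycSub S.selfAdjoint (irreducible_X_sub_C c) (t := 1) hzero (by rwa [one_mul])⟩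

theorem reversingSplitting (S : SymmSkewPair f T D) (hc : c ^ 2 = 4)
    (hx : IsUnipotentVector f T D c n x) :
    ReversingSplitting f T D (cycBlock T D x) (cycSub T x) (cycSub T (D x)) :=
  S.reversingSplitting_cycBlock (hx.nondegOn S) (hx.hasOrder_skew_and_nondegOn S hc).2

theorem cycBlock_le_unipotentKer (S : SymmSkewPair f T D) (hc : c ^ 2 = 4)
    (hx : IsUnipotentVector f T D c n x) : cycBlock T D x ≤ unipotentKer T D c n :=
  (invt_unipotentKer S c n).cycBlock_le (invt_skew_unipotentKer S hc n) hx.mem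

theorem aeval_pow_mem_span (hx : IsUnipotentVector f T D c n x) (hy : y ∈ cycBlock T D x) :
    ∃ a : K, aeval T ((X - C c) ^ n) y = a • aeval T ((X - C c) ^ n) x := by
  obtain ⟨_, hp, _, hq, rfl⟩ := Submodule.mem_sup.1 hy
  obtain ⟨p, rfl⟩ := mem_cycSub.1 hp
  obtain ⟨q, rfl⟩ := mem_cycSub.1 hq
  refine ⟨p.eval c, ?_⟩
  rw [map_add, ← aeval_mul_apply, ← aeval_mul_apply,
    aeval_apply_eq_zero_of_dvd hx.aeval_skew_eq_zero (dvd_mul_right _ q), add_zero, mul_comm,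
    aeval_mul_X_sub_C_pow hx.aeval_eq_zero]

variable [FiniteDimensional K V]

theorem finrank_cycBlock (S : SymmSkewPair f T D) (hc : c ^ 2 = 4)
    (hx : IsUnipotentVector f T D c n x) : finrank K (cycBlock T D x) = 2 * n + 1 := by
  rw [cycBlock, finrank_sup_of_disjoint
      ((hx.nondegOn S).disjoint_of_perp S.isSymm (S.perp_cycSub_skew x)),
    hx.hasOrder.finrank_cycSub_X_sub_C_pow,
    (hx.hasOrder_skew_and_nondegOn S hc).1.finrank_cycSub_X_sub_C_pow]
  ring

theorem exists_mem_inf_orthogonal (S : SymmSkewPair f T D) (hc : c ^ 2 = 4)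
    (hz : IsUnipotentVector f T D c n z) (hzU : cycBlock T D z ≤ U)
    (hU : U ≤ unipotentKer T D c n) (hvU : v ∈ U)
    (hvz : f (aeval T ((X - C c) ^ n) v) z = 0) (hv : f (aeval T ((X - C c) ^ n) v) v ≠ 0) :
    ∃ w ∈ U ⊓ f.orthogonal (cycBlock T D z), IsUnipotentVector f T D c n w := by
  have hnd := (hz.reversingSplitting S hc).nondegOn S.isSymm
  rw [← hnd.sup_inf_orthogonal S.isSymm hzU] at hvU
  obtain ⟨u, hu, w, hw, rfl⟩ := Submodule.mem_sup.1 hvU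
  obtain ⟨a, ha⟩ := hz.aeval_pow_mem_span hu
  have hperp {t : V} (ht : t ∈ cycBlock T D z) : f (aeval T ((X - C c) ^ n) w) t = 0 := by
    rw [apply_aeval_left S.selfAdjoint, S.isSymm.eq]
    exact hw.2 _ ((invt_cycBlock T D z).aeval_mem _ ht)
  have hzero : a = 0 := by
    rw [map_add, map_add, LinearMap.add_apply, hperp (self_mem_cycBlock T D z), add_zero, ha,
      map_smul, LinearMap.smul_apply, smul_eq_mul] at hvz
    exact (mul_eq_zero.1 hvz).resolve_right hz.apply_ne_zero
  refine ⟨w, hw, hU hw.1, ?_⟩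
  rwa [map_add (aeval T ((X - C c) ^ n)), ha, hzero, zero_smul, zero_add, map_add, hperp hu,
    zero_add] at hv

/-- Diagonalize the binary form `α² f(rⁿx, x) + β² f(rⁿy, y)` with first entry `d`, where
`r = T - c`; over a finite field it represents every scalar. -/
theorem exists_apply_eq_and_mem_inf_orthogonal [Finite K] (S : SymmSkewPair f T D)
    (hc : c ^ 2 = 4) (hx : IsUnipotentVector f T D c n x) (hy : IsUnipotentVector f T D c n y)
    (hxy : f (aeval T ((X - C c) ^ n) x) y = 0) (hUT : Invt T U) (hUD : Invt D U)
    (hU : U ≤ unipotentKer T D c n) (hxU : x ∈ U) (hyU : y ∈ U) {d : K} (hd : d ≠ 0) :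
    ∃ z ∈ U, f (aeval T ((X - C c) ^ n) z) z = d ∧
      ∃ w ∈ U ⊓ f.orthogonal (cycBlock T D z), IsUnipotentVector f T D c n w := by
  have hyx : f (aeval T ((X - C c) ^ n) y) x = 0 := by
    rwa [apply_aeval_left S.selfAdjoint, S.isSymm.eq]
  have hcomb (a b a' b' : K) :
      f (aeval T ((X - C c) ^ n) (a • x + b • y)) (a' • x + b' • y)
        = a * a' * f (aeval T ((X - C c) ^ n) x) x + b * b' * f (aeval T ((X - C c) ^ n) y) y := by
    simp only [map_add, map_smul, LinearMap.add_apply, LinearMap.smul_apply, smul_eq_mul, hxy, hyx]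
    ring
  have hmem (a b : K) : a • x + b • y ∈ U := U.add_mem (U.smul_mem a hxU) (U.smul_mem b hyU)
  obtain ⟨α, β, hαβ⟩ :=
    exists_sq_mul_add_sq_mul_eq S.two_ne_zero hx.apply_ne_zero hy.apply_ne_zero d
  have hzz : f (aeval T ((X - C c) ^ n) (α • x + β • y)) (α • x + β • y) = d := by
    rw [hcomb, ← hαβ]
    ring
  refine ⟨_, hmem α β, hzz, exists_mem_inf_orthogonal S hc ⟨hU (hmem α β), hzz ▸ hd⟩
    (hUT.cycBlock_le hUD (hmem α β)) hU
    (hmem (-(β * f (aeval T ((X - C c) ^ n) y) y)) (α * f (aeval T ((X - C c) ^ n) x) x)) ?_ ?_⟩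
  · rw [hcomb]
    ring
  · rw [hcomb]
    convert mul_ne_zero (mul_ne_zero hx.apply_ne_zero hy.apply_ne_zero) hd using 1
    rw [← hαβ]
    ring

variable [Fintype K] [DecidableEq K]

theorem one_mem_signs (S : SymmSkewPair f T D) (hq : quadraticChar K (-1) = -1) (hc : c ^ 2 = 4)
    (hx : IsUnipotentVector f T D c n x) :
    (1, (-1) ^ ((n + 1) / 2)) ∈ signs f T D (cycBlock T D x) := by
  have hsplit := hx.reversingSplitting S hc
  obtain ⟨hord, hnd⟩ := hx.hasOrder_skew_and_nondegOn S hc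
  rcases Nat.even_or_odd' n with ⟨h, rfl | rfl⟩
  · refine ⟨_, _, hsplit, ?_, ?_⟩
    · rw [hord.finrank_cycSub_X_sub_C_pow, (even_two_mul _).neg_one_pow]
    · rw [discSign_cycSub_even S.isSymm S.selfAdjoint (monic_X_sub_C c) hord hnd, hq,
        natDegree_X_sub_C, mul_one, show (2 * h + 1) / 2 = h by omega]
      simp
  · refine ⟨_, _, hsplit.swap S.isSymm, ?_, ?_⟩
    · have heven : Even (2 * h + 1 + 1) := ⟨h + 1, by ring⟩
      rw [hx.hasOrder.finrank_cycSub_X_sub_C_pow, heven.neg_one_pow]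
    · have hord' := hx.hasOrder
      rw [show 2 * h + 1 + 1 = 2 * (h + 1) by ring] at hord' ⊢
      rw [discSign_cycSub_even S.isSymm S.selfAdjoint (monic_X_sub_C c) hord' (hx.nondegOn S), hq,
        natDegree_X_sub_C, mul_one, Nat.mul_div_cancel_left _ two_pos]
      simp

theorem neg_one_mem_signs (S : SymmSkewPair f T D) (hq : quadraticChar K (-1) = -1)
    (hc : c ^ 2 = 4) (hx : IsUnipotentVector f T D c n x) {b : ℤˣ}
    (hb : (b : ℤ) = quadraticChar K ((2 * c) ^ n * f (aeval T ((X - C c) ^ n) x) x)) :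
    (-1, b * (-1) ^ ((n + 1) / 2)) ∈ signs f T D (cycBlock T D x) := by
  have hsplit := hx.reversingSplitting S hc
  obtain ⟨hord, hnd⟩ := hx.hasOrder_skew_and_nondegOn S hc
  have hsq := quadraticChar_sq_one' (S.two_mul_ne_zero hc)
  rcases Nat.even_or_odd' n with ⟨h, rfl | rfl⟩
  · rw [pow_mul, map_mul, map_pow, hsq, one_pow, one_mul] at hb
    refine ⟨_, _, hsplit.swap S.isSymm, ?_, ?_⟩
    · rw [hx.hasOrder.finrank_cycSub_X_sub_C_pow, Odd.neg_one_pow ⟨h, rfl⟩]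
    · rw [S.discSign_cycSub_odd_X_sub_C hx.hasOrder (hx.nondegOn S), hq,
        show (2 * h + 1) / 2 = h by omega, ← hb]
      simp
  · rw [pow_succ, pow_mul, mul_assoc, map_mul, map_pow, hsq, one_pow, one_mul] at hb
    refine ⟨_, _, hsplit, ?_, ?_⟩
    · rw [hord.finrank_cycSub_X_sub_C_pow, Odd.neg_one_pow ⟨h, rfl⟩]
    · rw [S.discSign_cycSub_odd_X_sub_C hord hnd, S.apply_pow_skew_skew hc hx.aeval_eq_zero,
        neg_mul, neg_eq_neg_one_mul (2 * c * _), map_mul, hq, ← hb,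
        show (2 * h + 1 + 1) / 2 = h + 1 by omega]
      push_cast
      ring

theorem signPattern (S : SymmSkewPair f T D) (hq : quadraticChar K (-1) = -1) (hc : c ^ 2 = 4)
    (hx : IsUnipotentVector f T D c n x) :
    SignPattern f T D (cycBlock T D x) {(n + 1, c)} := by
  obtain ⟨b, hb⟩ := exists_units_eq_quadraticChar
    (mul_ne_zero (pow_ne_zero n (S.two_mul_ne_zero hc)) hx.apply_ne_zero)
  refine .graded {(n + 1, c)} 0 (by simpa using hc) ?_ ?_
    fun _ => ⟨_, hx.neg_one_mem_signs S hq hc hb⟩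
  · rw [hx.finrank_cycBlock S hc, Finset.sum_singleton]
    omega
  · rw [Finset.sum_singleton, zero_add]
    exact hx.one_mem_signs S hq hc

theorem neg_one_mem_signs_of_orthogonal (S : SymmSkewPair f T D) (hq : quadraticChar K (-1) = -1)
    (hc : c ^ 2 = 4) (hz : IsUnipotentVector f T D c n z) (hzU : cycBlock T D z ≤ U)
    (hUT : Invt T U) (hUD : Invt D U) (hdim : finrank K U = 2 * (2 * n + 1))
    {w : V} (hwU : w ∈ U ⊓ f.orthogonal (cycBlock T D z)) (hw : IsUnipotentVector f T D c n w)
    {b : ℤˣ} (hb : (b : ℤ) = quadraticChar K ((2 * c) ^ n * f (aeval T ((X - C c) ^ n) z) z)) :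
    (-1, b) ∈ signs f T D U := by
  have hnd := (hz.reversingSplitting S hc).nondegOn S.isSymm
  have hcompl : cycBlock T D w = U ⊓ f.orthogonal (cycBlock T D z) := by
    refine Submodule.eq_of_le_of_finrank_eq
      ((S.invt_inf_orthogonal hUT (invt_cycBlock T D z)).cycBlock_le
        (S.invt_skew_inf_orthogonal hUD (S.invt_skew_cycBlock z)) hwU) ?_
    have := hnd.finrank_add_finrank_inf_orthogonal S.isSymm hzU
    rw [hz.finrank_cycBlock S hc] at this
    rw [hw.finrank_cycBlock S hc]
    omega
  have hmem := mul_mem_signs S.isSymm (hcompl ▸ perp_inf_orthogonal f _ U)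
    (hz.neg_one_mem_signs S hq hc hb) (hw.one_mem_signs S hq hc)
  rwa [hcompl, hnd.sup_inf_orthogonal S.isSymm hzU, Prod.mk_mul_mk, mul_one, mul_assoc,
    Int.units_mul_self, mul_one] at hmem

theorem signPattern_sup (S : SymmSkewPair f T D) (hq : quadraticChar K (-1) = -1) (hc : c ^ 2 = 4)
    (hx : IsUnipotentVector f T D c n x) (hy : IsUnipotentVector f T D c n y)
    (hperp : Perp f (cycBlock T D x) (cycBlock T D y)) :
    SignPattern f T D (cycBlock T D x ⊔ cycBlock T D y) ∅ := by
  set U := cycBlock T D x ⊔ cycBlock T D y with hU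
  have hUT : Invt T U := (invt_cycBlock T D x).sup (invt_cycBlock T D y)
  have hUD : Invt D U := (S.invt_skew_cycBlock x).sup (S.invt_skew_cycBlock y)
  have hker : U ≤ unipotentKer T D c n :=
    sup_le (hx.cycBlock_le_unipotentKer S hc) (hy.cycBlock_le_unipotentKer S hc)
  have hdim : finrank K U = 2 * (2 * n + 1) := by
    have hnd := (hx.reversingSplitting S hc).nondegOn S.isSymm
    rw [hU, finrank_sup_of_disjoint (hnd.disjoint_of_perp S.isSymm hperp),
      hx.finrank_cycBlock S hc, hy.finrank_cycBlock S hc]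
    ring
  refine .half (hdim ▸ even_two_mul _) fun b => ?_
  rw [hdim, Nat.mul_div_cancel_left _ two_pos, Odd.neg_one_pow ⟨n, rfl⟩]
  have hpow := pow_ne_zero n (S.two_mul_ne_zero hc)
  have hb : quadraticChar K ((b : ℤ) : K) = b := by
    rcases Int.units_eq_one_or b with rfl | rfl <;> simp [hq]
  have hb0 : ((b : ℤ) : K) ≠ 0 := by
    rcases Int.units_eq_one_or b with rfl | rfl <;> simp
  obtain ⟨z, hzU, hzz, w, hwU, hw⟩ := exists_apply_eq_and_mem_inf_orthogonal S hc hx hy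
    (hperp _ ((invt_cycBlock T D x).aeval_mem _ (self_mem_cycBlock T D x)) _
      (self_mem_cycBlock T D y)) hUT hUD hker
    (Submodule.mem_sup_left (self_mem_cycBlock T D x))
    (Submodule.mem_sup_right (self_mem_cycBlock T D y)) (div_ne_zero hb0 hpow)
  have hz : IsUnipotentVector f T D c n z := ⟨hker hzU, hzz ▸ div_ne_zero hb0 hpow⟩
  refine hz.neg_one_mem_signs_of_orthogonal S hq hc (hUT.cycBlock_le hUD hzU) hUT hUD hdim hwU hw ?_
  rw [hzz, mul_div_cancel₀ _ hpow, hb]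

end IsUnipotentVector

end Unipotent

/-! ### Splitting off blocks -/

section Blocks

theorem pow_mul_mem_of_isCoprime {R : Type*} [CommRing R] {I : Ideal R} {r s : R} {n : ℕ}
    (hrs : IsCoprime r s) (hpow : r ^ (n + 1) * s ∈ I) (hsq : r ^ n * s * s ∈ I) :
    r ^ n * s ∈ I := by
  obtain ⟨a, b, hab⟩ := hrs
  have h : r ^ n * s = a * (r ^ (n + 1) * s) + b * (r ^ n * s * s) := by
    linear_combination (-(r ^ n * s)) * hab
  rw [h]
  exact I.add_mem (I.mul_mem_left a hpow) (I.mul_mem_left b hsq)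

theorem exists_eq_X_sub_C_of_dvd {r : K[X]} (hr : Irreducible r) (hm : r.Monic)
    (h : r ∣ X ^ 2 - C 4) : ∃ c : K, c ^ 2 = 4 ∧ r = X - C c := by
  have heq {c : K} (hc : r ∣ X - C c) : r = X - C c :=
    eq_of_monic_of_associated hm (monic_X_sub_C c)
      (hr.associated_of_dvd (irreducible_X_sub_C c) hc)
  have hfactor : (X ^ 2 - C 4 : K[X]) = (X - C 2) * (X - C (-2)) := by
    rw [show (4 : K) = 2 * 2 by norm_num, C_mul, C_neg]
    ring
  rw [hfactor] at h
  rcases hr.prime.dvd_or_dvd h with h | h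
  · exact ⟨2, by norm_num, heq h⟩
  · exact ⟨-2, by norm_num, heq h⟩

/-- The ideal of polynomials `g` with `g(T) = 0` on `W`. -/
def annIdeal (T : Module.End K V) (W : Submodule K V) : Ideal K[X] where
  carrier := {g | ∀ v ∈ W, aeval T g v = 0}
  add_mem' hg hh v hv := by rw [aeval_add_apply, hg v hv, hh v hv, add_zero]
  zero_mem' v _ := by rw [map_zero, LinearMap.zero_apply]
  smul_mem' p g hg v hv := by rw [smul_eq_mul, aeval_mul_apply, hg v hv, map_zero]

/-- The pairs `(e, c)` such that `(X - c) ^ e` divides the minimal polynomial of `T` on `W`. -/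
def primaryPowers (T : Module.End K V) (W : Submodule K V) : Set (ℕ × K) :=
  {p | annIdeal T W ≤ Ideal.span {(X - C p.2) ^ p.1}}

variable {f : LinearMap.BilinForm K V} {T D : Module.End K V} {U W : Submodule K V} {r s p : K[X]}
  {c : K} {n : ℕ} {Y : Set (ℕ × K)}

theorem annIdeal_anti (h : U ≤ W) : annIdeal T W ≤ annIdeal T U :=
  fun _ hp v hv => hp v (h hv)

theorem primaryPowers_mono (h : U ≤ W) : primaryPowers T U ⊆ primaryPowers T W :=
  fun _ hp => (annIdeal_anti h).trans hp

theorem aeval_pow_aeval_eq_zero (hker : r ^ n * s ∈ annIdeal T W) {v : V} (hv : v ∈ W) :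
    aeval T (r ^ n) (aeval T s v) = 0 := by
  rw [← aeval_mul_apply]
  exact hker v hv

theorem exists_annIdeal_eq_span [FiniteDimensional K V] (T : Module.End K V) (hW : W ≠ ⊥) :
    ∃ (r s : K[X]) (n : ℕ), Irreducible r ∧ r.Monic ∧ IsCoprime r s ∧
      annIdeal T W = Ideal.span {r ^ (n + 1) * s} := by
  obtain ⟨μ, hμ⟩ : ∃ μ, annIdeal T W = Ideal.span {μ} :=
    (IsPrincipalIdealRing.principal (annIdeal T W)).principal
  have hμ0 : μ ≠ 0 := by
    rintro rfl
    have hmin : minpoly K T ∈ annIdeal T W := fun v _ => by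
      rw [minpoly.aeval, LinearMap.zero_apply]
    rw [hμ, Ideal.mem_span_singleton, zero_dvd_iff] at hmin
    exact minpoly.ne_zero (Algebra.IsIntegral.isIntegral T) hmin
  have hμu : ¬IsUnit μ := by
    rw [← Ideal.span_singleton_eq_top, ← hμ, Ideal.eq_top_iff_one]
    exact fun hone => hW (eq_bot_iff.2 fun v hv => by simpa using hone v hv)
  obtain ⟨r, hm, hr, hdvd⟩ := exists_monic_irreducible_factor μ hμu
  obtain ⟨s, hs, hrs⟩ := (FiniteMultiplicity.of_not_isUnit hr.not_isUnit hμ0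
    : FiniteMultiplicity r μ).exists_eq_pow_mul_and_not_dvd
  have hmult : multiplicity r μ ≠ 0 := fun h => by
    rw [h, pow_zero, one_mul] at hs
    exact hrs (hs ▸ hdvd)
  obtain ⟨n, hn⟩ := Nat.exists_eq_succ_of_ne_zero hmult
  exact ⟨r, s, n, hr, hm, hr.coprime_iff_not_dvd.2 hrs,
    by rw [hμ, ← Nat.succ_eq_add_one, ← hn, ← hs]⟩

theorem not_pow_succ_dvd_pow_mul (hr : Irreducible r) (hrs : IsCoprime r s) :
    ¬r ^ (n + 1) ∣ r ^ n * s := fun hdvd => by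
  have h := hrs.pow_left.dvd_of_dvd_mul_right hdvd
  rw [pow_dvd_pow_iff hr.ne_zero hr.not_isUnit] at h
  omega

theorem pow_mul_notMem_annIdeal (hr : Irreducible r) (hrs : IsCoprime r s)
    (hI : annIdeal T W = Ideal.span {r ^ (n + 1) * s}) : r ^ n * s ∉ annIdeal T W := by
  rw [hI, Ideal.mem_span_singleton]
  exact fun hdvd => not_pow_succ_dvd_pow_mul hr hrs ((dvd_mul_right _ s).trans hdvd)

theorem SymmSkewPair.exists_mem_apply_pow_ne_zero (S : SymmSkewPair f T D) (hW : NondegOn f W)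
    (hT : Invt T W) (hrs : IsCoprime r s) (hker : r ^ (n + 1) * s ∈ annIdeal T W)
    (hne : r ^ n * s ∉ annIdeal T W) :
    ∃ x ∈ W, (∃ v ∈ W, x = aeval T s v) ∧ f (aeval T (r ^ n) x) x ≠ 0 := by
  obtain ⟨u, hu, hu0⟩ : ∃ u ∈ W, aeval T (r ^ n * s * s) u ≠ 0 := by
    by_contra! hsq
    exact hne (pow_mul_mem_of_isCoprime hrs hker hsq)
  obtain ⟨v, hv, hvv⟩ := hW.exists_apply_ne_zero S.isSymm S.two_ne_zero
    (apply_aeval_left S.selfAdjoint _) (fun x => hT.aeval_mem _) hu hu0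
  refine ⟨_, hT.aeval_mem s hv, ⟨v, hv, rfl⟩, ?_⟩
  rwa [← aeval_mul_apply, apply_aeval_aeval S.selfAdjoint]

section SignBlock

variable [FiniteDimensional K V] [Fintype K] [DecidableEq K]

/-- A nonzero invariant block `U` of `W` with a sign pattern indexed by primary powers that occur
in `W` but no longer in the orthogonal complement of `U`. -/
structure IsSignBlock (f : LinearMap.BilinForm K V) (T D : Module.End K V) (W U : Submodule K V)
    (Y : Set (ℕ × K)) : Prop where
  le : U ≤ W
  ne_bot : U ≠ ⊥
  invt : Invt T U
  invt_skew : Invt D U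
  signPattern : SignPattern f T D U Y
  subset : Y ⊆ primaryPowers T W
  disjoint : Disjoint Y (primaryPowers T (W ⊓ f.orthogonal U))

theorem IsSignBlock.signPattern_of_inf_orthogonal (hf : f.IsSymm) (hU : IsSignBlock f T D W U Y)
    (hcompl : SignPattern f T D (W ⊓ f.orthogonal U) (primaryPowers T (W ⊓ f.orthogonal U))) :
    SignPattern f T D W (primaryPowers T W) := by
  have hsup := hU.signPattern.sup hf (perp_inf_orthogonal f U W) hU.disjoint hcompl
  rw [(hU.signPattern.nondegOn hf).sup_inf_orthogonal hf hU.le] at hsup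
  exact hsup.mono (Set.union_subset hU.subset (primaryPowers_mono inf_le_left))

theorem IsSignBlock.finrank_inf_orthogonal_lt (hf : f.IsSymm) (hU : IsSignBlock f T D W U Y) :
    finrank K (W ⊓ f.orthogonal U : Submodule K V) < finrank K W := by
  have hsum := (hU.signPattern.nondegOn hf).finrank_add_finrank_inf_orthogonal hf hU.le
  have hpos : finrank K U ≠ 0 := Submodule.finrank_eq_zero.not.2 hU.ne_bot
  omega

theorem SymmSkewPair.exists_isSignBlock_of_isCoprime (S : SymmSkewPair f T D)
    (hq : quadraticChar K (-1) = -1) (hT : Invt T W) (hD : Invt D W) (hW : NondegOn f W)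
    (hr : Irreducible r) (hm : r.Monic) (hrs : IsCoprime r s)
    (hI : annIdeal T W = Ideal.span {r ^ (n + 1) * s}) (hc : IsCoprime r (X ^ 2 - C 4)) :
    ∃ U, IsSignBlock f T D W U ∅ := by
  have hker : r ^ (n + 1) * s ∈ annIdeal T W := hI ▸ Ideal.mem_span_singleton_self _
  obtain ⟨x, hxW, ⟨v, hv, rfl⟩, hxx⟩ := S.exists_mem_apply_pow_ne_zero hW hT hrs hker
    (pow_mul_notMem_annIdeal hr hrs hI)
  have hzero := aeval_pow_aeval_eq_zero hker hv
  have hne : aeval T (r ^ n) (aeval T s v) ≠ 0 := fun h => hxx (by rw [h, map_zero]; rfl)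
  exact ⟨cycBlock T D (aeval T s v),
    { le := hT.cycBlock_le hD hxW
      ne_bot := (Submodule.ne_bot_iff _).2
        ⟨_, self_mem_cycBlock T D _, fun h => hne (by rw [h, map_zero])⟩
      invt := invt_cycBlock T D _
      invt_skew := S.invt_skew_cycBlock _
      signPattern := S.signPattern_of_isCoprime hq hr hm (hasOrder_pow hr hzero hne)
        (nondegOn_cycSub S.selfAdjoint hr (t := 1) hzero (by rwa [one_mul])) hc
      subset := Set.empty_subset _
      disjoint := Set.empty_disjoint _ }⟩

theorem SymmSkewPair.exists_isSignBlock_hyperbolic (S : SymmSkewPair f T D)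
    (hq : quadraticChar K (-1) = -1) (hT : Invt T W) (hD : Invt D W) (hW : NondegOn f W)
    (hc : c ^ 2 = 4) (hrs : IsCoprime (X - C c) s)
    (hker : (X - C c) ^ (n + 1) * s ∈ annIdeal T W)
    (hskew : (X - C c) ^ n * s ∉ annIdeal T (W.map D)) : ∃ U, IsSignBlock f T D W U ∅ := by
  have hle : W.map D ≤ W := Submodule.map_le_iff_le_comap.2 hD
  obtain ⟨_, ⟨v, hv, rfl⟩, hne⟩ :
      ∃ u ∈ W.map D, aeval T ((X - C c) ^ n * s * s) u ≠ 0 := by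
    by_contra! hsq
    exact hskew (pow_mul_mem_of_isCoprime hrs (annIdeal_anti hle hker) hsq)
  obtain ⟨w, hw, hvw⟩ : ∃ w ∈ W, f (aeval T ((X - C c) ^ n * s * s) (D v)) w ≠ 0 := by
    by_contra! hperp
    exact hne (hW _ (hT.aeval_mem _ (hD v hv)) hperp)
  rw [← apply_aeval_aeval S.selfAdjoint, aeval_mul_apply, S.aeval_skew s] at hvw
  have hx := aeval_pow_aeval_eq_zero hker hv
  have hy := aeval_pow_aeval_eq_zero hker hw
  have hxW := hT.aeval_mem s hv
  have hyW := hT.aeval_mem s hw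
  generalize aeval T s v = x at *
  generalize aeval T s w = y at *
  obtain ⟨q, hxz, hDxz⟩ := S.exists_add_aeval_skew_perp hc hx hvw
  have hz : aeval T ((X - C c) ^ (n + 1)) (y + aeval T q (D y)) = 0 := by
    rw [map_add, hy, ← aeval_mul_apply, zero_add]
    exact aeval_apply_eq_zero_of_dvd (S.aeval_skew_eq_zero hy) (dvd_mul_right _ _)
  have hzW : y + aeval T q (D y) ∈ W := W.add_mem hyW (hT.aeval_mem q (hD y hyW))
  exact ⟨_,
    { le := sup_le (hT.cycBlock_le hD hxW) (hT.cycBlock_le hD hzW)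
      ne_bot := (Submodule.ne_bot_iff _).2
        ⟨x, Submodule.mem_sup_left (self_mem_cycBlock T D x), by rintro rfl; simp at hDxz⟩
      invt := (invt_cycBlock T D x).sup (invt_cycBlock T D _)
      invt_skew := (S.invt_skew_cycBlock x).sup (S.invt_skew_cycBlock _)
      signPattern := S.signPattern_hyperbolic hq hc hx hz hDxz hxz
      subset := Set.empty_subset _
      disjoint := Set.empty_disjoint _ }⟩

end SignBlock

theorem SymmSkewPair.exists_isUnipotentVector (S : SymmSkewPair f T D) (hW : NondegOn f W)
    (hT : Invt T W) (hrs : IsCoprime (X - C c) s)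
    (hker : (X - C c) ^ (n + 1) * s ∈ annIdeal T W)
    (hskew : (X - C c) ^ n * s ∈ annIdeal T (W.map D))
    (hne : (X - C c) ^ n * s ∉ annIdeal T W) : ∃ x ∈ W, IsUnipotentVector f T D c n x := by
  obtain ⟨x, hxW, ⟨v, hv, rfl⟩, hxx⟩ := S.exists_mem_apply_pow_ne_zero hW hT hrs hker hne
  refine ⟨_, hxW, mem_unipotentKer.2 ⟨aeval_pow_aeval_eq_zero hker hv, ?_⟩, hxx⟩
  rw [← S.aeval_skew]
  exact aeval_pow_aeval_eq_zero hskew (Submodule.mem_map_of_mem hv)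

variable [FiniteDimensional K V] [Fintype K] [DecidableEq K]

/-- If the orthogonal complement of a unipotent block contains another one with the same parameters,
the two are split off together; otherwise the complement has a smaller power of `X - c` in its
minimal polynomial. -/
theorem SymmSkewPair.exists_isSignBlock_unipotent (S : SymmSkewPair f T D)
    (hq : quadraticChar K (-1) = -1) (hT : Invt T W) (hD : Invt D W) (hW : NondegOn f W)
    (hc : c ^ 2 = 4) (hrs : IsCoprime (X - C c) s)
    (hI : annIdeal T W = Ideal.span {(X - C c) ^ (n + 1) * s})
    (hskew : (X - C c) ^ n * s ∈ annIdeal T (W.map D)) : ∃ U Y, IsSignBlock f T D W U Y := by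
  have hr := irreducible_X_sub_C c
  have hker : (X - C c) ^ (n + 1) * s ∈ annIdeal T W := hI ▸ Ideal.mem_span_singleton_self _
  obtain ⟨x, hxW, hx⟩ := S.exists_isUnipotentVector hW hT hrs hker hskew
    (pow_mul_notMem_annIdeal hr hrs hI)
  have hxle := hT.cycBlock_le hD hxW
  have hbot {U : Submodule K V} (hxU : cycBlock T D x ≤ U) : U ≠ ⊥ :=
    (Submodule.ne_bot_iff U).2
      ⟨x, hxU (self_mem_cycBlock T D x), by rintro rfl; simpa using hx.apply_ne_zero⟩
  set W' := W ⊓ f.orthogonal (cycBlock T D x)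
  have hT' : Invt T W' := S.invt_inf_orthogonal hT (invt_cycBlock T D x)
  have hD' : Invt D W' := S.invt_skew_inf_orthogonal hD (S.invt_skew_cycBlock x)
  by_cases hne : (X - C c) ^ n * s ∈ annIdeal T W'
  · refine ⟨cycBlock T D x, {(n + 1, c)}, hxle, hbot le_rfl, invt_cycBlock T D x,
      S.invt_skew_cycBlock x, hx.signPattern S hq hc, ?_, ?_⟩
    · refine Set.singleton_subset_iff.2 (hI.trans_le ?_)
      exact Ideal.span_singleton_le_span_singleton.2 (dvd_mul_right _ s)
    · exact Set.disjoint_singleton_left.2 fun hmem =>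
        not_pow_succ_dvd_pow_mul hr hrs (Ideal.mem_span_singleton.1 (hmem hne))
  · have hnd := hW.inf_orthogonal S.isSymm ((hx.reversingSplitting S hc).nondegOn S.isSymm) hxle
    obtain ⟨y, hyW, hy⟩ := S.exists_isUnipotentVector hnd hT' hrs (annIdeal_anti inf_le_left hker)
      (annIdeal_anti (Submodule.map_mono inf_le_left) hskew) hne
    have hyle := hT'.cycBlock_le hD' hyW
    exact ⟨_, ∅, sup_le hxle (hyle.trans inf_le_left), hbot le_sup_left,
      (invt_cycBlock T D x).sup (invt_cycBlock T D y),
      (S.invt_skew_cycBlock x).sup (S.invt_skew_cycBlock y),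
      hx.signPattern_sup S hq hc hy ((perp_inf_orthogonal f _ W).mono le_rfl hyle),
      Set.empty_subset _, Set.empty_disjoint _⟩

theorem SymmSkewPair.exists_isSignBlock (S : SymmSkewPair f T D) (hq : quadraticChar K (-1) = -1)
    (hT : Invt T W) (hD : Invt D W) (hW : NondegOn f W) (hbot : W ≠ ⊥) :
    ∃ U Y, IsSignBlock f T D W U Y := by
  obtain ⟨r, s, n, hr, hm, hrs, hI⟩ := exists_annIdeal_eq_span T hbot
  by_cases hdvd : r ∣ X ^ 2 - C 4
  · obtain ⟨c, hc, rfl⟩ := exists_eq_X_sub_C_of_dvd hr hm hdvd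
    by_cases hskew : (X - C c) ^ n * s ∈ annIdeal T (W.map D)
    · exact S.exists_isSignBlock_unipotent hq hT hD hW hc hrs hI hskew
    · obtain ⟨U, hU⟩ := S.exists_isSignBlock_hyperbolic hq hT hD hW hc hrs
        (hI ▸ Ideal.mem_span_singleton_self _) hskew
      exact ⟨U, ∅, hU⟩
  · obtain ⟨U, hU⟩ := S.exists_isSignBlock_of_isCoprime hq hT hD hW hr hm hrs hI
      (hr.coprime_iff_not_dvd.2 hdvd)
    exact ⟨U, ∅, hU⟩

theorem SymmSkewPair.signPattern_of_invt (S : SymmSkewPair f T D) (hq : quadraticChar K (-1) = -1)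
    (hT : Invt T W) (hD : Invt D W) (hW : NondegOn f W) :
    SignPattern f T D W (primaryPowers T W) := by
  induction hn : finrank K W using Nat.strong_induction_on generalizing W with
  | _ n ih =>
    by_cases hbot : W = ⊥
    · rw [hbot]
      exact .bot f T D _
    obtain ⟨U, Y, hU⟩ := S.exists_isSignBlock hq hT hD hW hbot
    exact hU.signPattern_of_inf_orthogonal S.isSymm <|
      ih _ (hn ▸ hU.finrank_inf_orthogonal_lt S.isSymm)
        (S.invt_inf_orthogonal hT hU.invt) (S.invt_skew_inf_orthogonal hD hU.invt_skew)
        (hW.inf_orthogonal S.isSymm (hU.signPattern.nondegOn S.isSymm) hU.le) rfl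

end Blocks

/-! ### Involutions in `Ω(V)` -/

section OmegaNegation

variable {f : LinearMap.BilinForm K V} {N N₁ N₂ : Submodule K V} {u v w : V}

theorem reflection_mem_orthGroup (hf : f.IsSymm) {c : K} (h : (c • f v) v = 2) :
    reflection h ∈ orthGroup f := by
  intro x y
  have hc : c * f v v = 2 := h
  simp only [reflection_apply, LinearMap.smul_apply, LinearMap.sub_apply, map_sub, map_smul,
    smul_eq_mul]
  rw [hf.eq x v]
  linear_combination (c * f v x * f v y) * hc

/-- The involution `-1` of `N`, extended by the identity of the orthogonal complement, belongs
to `Ω(V)`. -/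
def HasOmegaNegation (f : LinearMap.BilinForm K V) (N : Submodule K V) : Prop :=
  ∃ σ ∈ omegaGroup f, (∀ x ∈ N, σ x = -x) ∧ ∀ x ∈ f.orthogonal N, σ x = x

theorem hasOmegaNegation_bot (f : LinearMap.BilinForm K V) : HasOmegaNegation f ⊥ :=
  ⟨1, one_mem _, fun x hx => by simp [(Submodule.mem_bot K).1 hx], fun _ _ => rfl⟩

theorem HasOmegaNegation.sup (hf : f.IsSymm) (hN : Perp f N₁ N₂) (h₁ : HasOmegaNegation f N₁)
    (h₂ : HasOmegaNegation f N₂) : HasOmegaNegation f (N₁ ⊔ N₂) := by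
  obtain ⟨σ₁, hσ₁, hneg₁, hfix₁⟩ := h₁
  obtain ⟨σ₂, hσ₂, hneg₂, hfix₂⟩ := h₂
  refine ⟨σ₁ * σ₂, mul_mem hσ₁ hσ₂, fun x hx => ?_, fun x hx => ?_⟩
  · obtain ⟨a, ha, b, hb, rfl⟩ := Submodule.mem_sup.1 hx
    rw [LinearEquiv.mul_apply, map_add, hneg₂ b hb, hfix₂ a fun y hy => hN.symm hf y hy a ha,
      map_add, hneg₁ a ha, map_neg, hfix₁ b fun y hy => hN y hy b hb, neg_add]
  · rw [LinearEquiv.mul_apply, hfix₂ x fun y hy => hx y (Submodule.mem_sup_right hy),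
      hfix₁ x fun y hy => hx y (Submodule.mem_sup_left hy)]

/-- The reflection along `u - w` interchanges `u` and `w`, so its commutator with the reflection
along `u` is the product of the reflections along `u` and `w`. -/
theorem hasOmegaNegation_span_sup_span (hf : f.IsSymm) (hu : f u u = 1) (hw : f w w = 1)
    (huw : f u w = 0) :
    HasOmegaNegation f (Submodule.span K {u} ⊔ Submodule.span K {w}) := by
  have hwu : f w u = 0 := by rw [hf.eq, huw]
  have hs : ((2 : K) • f u) u = 2 := by rw [LinearMap.smul_apply, hu, smul_eq_mul, mul_one]
  have ht : ((1 : K) • f (u - w)) (u - w) = 2 := by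
    simp only [one_smul, map_sub, LinearMap.sub_apply, hu, hw, huw, hwu]
    norm_num
  set ρ := reflection hs
  set τ := reflection ht
  have hcomm : ∀ x, (ρ * τ * ρ⁻¹ * τ⁻¹) x = x - (2 * f u x) • u - (2 * f w x) • w := by
    intro x
    simp only [ρ, τ, reflection_inv, LinearEquiv.mul_apply, reflection_apply,
      LinearMap.smul_apply, map_sub, map_smul, LinearMap.sub_apply, smul_eq_mul, hu, hw, huw, hwu]
    module
  refine ⟨ρ * τ * ρ⁻¹ * τ⁻¹, Subgroup.commutator_mem_commutator (reflection_mem_orthGroup hf hs)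
    (reflection_mem_orthGroup hf ht), fun x hx => ?_, fun x hx => ?_⟩
  · obtain ⟨_, ha, _, hb, rfl⟩ := Submodule.mem_sup.1 hx
    obtain ⟨a, rfl⟩ := Submodule.mem_span_singleton.1 ha
    obtain ⟨b, rfl⟩ := Submodule.mem_span_singleton.1 hb
    simp only [hcomm, map_add, map_smul, smul_eq_mul, hu, hw, huw, hwu]
    module
  · have hux : f u x = 0 := hx u (Submodule.mem_sup_left (Submodule.mem_span_singleton_self u))
    have hwx : f w x = 0 := hx w (Submodule.mem_sup_right (Submodule.mem_span_singleton_self w))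
    simp only [hcomm, hux, hwx, mul_zero, zero_smul, sub_zero]

theorem nondegOn_span_singleton (hv : f v v ≠ 0) : NondegOn f (Submodule.span K {v}) := by
  intro x hx hxy
  obtain ⟨a, rfl⟩ := Submodule.mem_span_singleton.1 hx
  have hav := hxy v (Submodule.mem_span_singleton_self v)
  rw [map_smul, LinearMap.smul_apply, smul_eq_mul] at hav
  rw [(mul_eq_zero.1 hav).resolve_right hv, zero_smul]

theorem ne_zero_of_apply_self_ne_zero (hv : f v v ≠ 0) : v ≠ 0 := by
  rintro rfl
  exact hv (by simp)

theorem NondegOn.exists_apply_self_ne_zero (hf : f.IsSymm) (h2 : (2 : K) ≠ 0) (hN : NondegOn f N)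
    (hN0 : N ≠ ⊥) : ∃ v ∈ N, f v v ≠ 0 := by
  obtain ⟨u, hu, hu0⟩ := N.exists_mem_ne_zero_of_ne_bot hN0
  exact hN.exists_apply_ne_zero hf h2 (L := LinearMap.id) (fun _ _ => rfl) (fun _ hx => hx) hu hu0

theorem finrank_inf_orthogonal_span_singleton [FiniteDimensional K V] (hf : f.IsSymm)
    (hv : v ∈ N) (hvv : f v v ≠ 0) :
    finrank K ↥(N ⊓ f.orthogonal (Submodule.span K {v})) + 1 = finrank K N := by
  rw [← (nondegOn_span_singleton hvv).finrank_add_finrank_inf_orthogonal hf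
    ((Submodule.span_singleton_le_iff_mem v N).2 hv),
    finrank_span_singleton (ne_zero_of_apply_self_ne_zero hvv), add_comm]

theorem NondegOn.exists_apply_self_eq_one_of_two_le [Finite K]
    [FiniteDimensional K V] (hf : f.IsSymm) (h2 : (2 : K) ≠ 0) (hN : NondegOn f N)
    (hdim : 2 ≤ finrank K N) : ∃ u ∈ N, f u u = 1 := by
  have hN0 : N ≠ ⊥ := by rw [← Submodule.one_le_finrank_iff]; omega
  obtain ⟨v, hv, hvv⟩ := hN.exists_apply_self_ne_zero hf h2 hN0
  have hcompl := hN.inf_orthogonal hf (nondegOn_span_singleton hvv)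
    ((Submodule.span_singleton_le_iff_mem v N).2 hv)
  have hcompl0 : N ⊓ f.orthogonal (Submodule.span K {v}) ≠ ⊥ := by
    have := finrank_inf_orthogonal_span_singleton hf hv hvv
    rw [← Submodule.one_le_finrank_iff]
    omega
  obtain ⟨w, ⟨hw, hvw⟩, hww⟩ := hcompl.exists_apply_self_ne_zero hf h2 hcompl0
  replace hvw : f v w = 0 := hvw v (Submodule.mem_span_singleton_self v)
  have hwv : f w v = 0 := by rw [hf.eq, hvw]
  obtain ⟨s, t, hst⟩ := exists_sq_mul_add_sq_mul_eq h2 hvv hww 1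
  refine ⟨s • v + t • w, N.add_mem (N.smul_mem s hv) (N.smul_mem t hw), ?_⟩
  simp only [map_add, map_smul, LinearMap.add_apply, LinearMap.smul_apply, smul_eq_mul, hvw, hwv]
  linear_combination hst

variable [Fintype K] [DecidableEq K] [FiniteDimensional K V]

theorem discSign_span_singleton (hv : v ≠ 0) :
    discSign f (Submodule.span K {v}) = quadraticChar K (f v v) := by
  have hli : LinearIndependent K fun _ : Unit => v := linearIndependent_unique_iff.2 hv
  rw [discSign_eq_quadraticChar_det f hli (by rw [Set.range_const])]
  simp [gramMatrix]

theorem discSign_inf_orthogonal_span_singleton (hf : f.IsSymm) (hu : u ∈ N) (huu : f u u = 1) :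
    discSign f (N ⊓ f.orthogonal (Submodule.span K {u})) = discSign f N := by
  have hne : f u u ≠ 0 := huu ▸ one_ne_zero
  have hline := nondegOn_span_singleton hne
  have hperp := perp_inf_orthogonal f (Submodule.span K {u}) N
  have hsup := discSign_sup hperp (hline.disjoint_of_perp hf hperp)
  rwa [hline.sup_inf_orthogonal hf ((Submodule.span_singleton_le_iff_mem u N).2 hu),
    discSign_span_singleton (ne_zero_of_apply_self_ne_zero hne), huu, map_one, one_mul,
    eq_comm] at hsup

theorem exists_apply_self_eq_one_of_finrank_eq_one (hdim : finrank K N = 1)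
    (hdisc : discSign f N = 1) : ∃ u ∈ N, f u u = 1 := by
  have hN0 : N ≠ ⊥ := by rw [← Submodule.one_le_finrank_iff, hdim]
  obtain ⟨v, hv, hv0⟩ := N.exists_mem_ne_zero_of_ne_bot hN0
  have hspan : Submodule.span K {v} = N := Submodule.eq_of_le_of_finrank_eq
    ((Submodule.span_singleton_le_iff_mem v N).2 hv) (by rw [finrank_span_singleton hv0, hdim])
  rw [← hspan, discSign_span_singleton hv0] at hdisc
  have hvv : f v v ≠ 0 := fun h => by simp [h] at hdisc
  obtain ⟨a, ha⟩ := (quadraticChar_one_iff_isSquare hvv).1 hdisc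
  have ha0 : a ≠ 0 := by
    rintro rfl
    exact hvv (by rw [ha, zero_mul])
  refine ⟨a⁻¹ • v, N.smul_mem _ hv, ?_⟩
  simp only [map_smul, LinearMap.smul_apply, smul_eq_mul, ha]
  field_simp

theorem NondegOn.hasOmegaNegation (hf : f.IsSymm) (h2 : (2 : K) ≠ 0) (hN : NondegOn f N)
    (hdim : Even (finrank K N)) (hdisc : discSign f N = 1) : HasOmegaNegation f N := by
  obtain ⟨n, hn⟩ := hdim
  induction n generalizing N with
  | zero => rw [Submodule.finrank_eq_zero.1 hn]; exact hasOmegaNegation_bot f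
  | succ n ih =>
    obtain ⟨u, hu, huu⟩ := hN.exists_apply_self_eq_one_of_two_le hf h2 (by omega)
    have hune : f u u ≠ 0 := huu ▸ one_ne_zero
    have hule := (Submodule.span_singleton_le_iff_mem u N).2 hu
    have hnd₁ := hN.inf_orthogonal hf (nondegOn_span_singleton hune) hule
    have hdim₁ := finrank_inf_orthogonal_span_singleton hf hu hune
    have hdisc₁ := discSign_inf_orthogonal_span_singleton hf hu huu
    have hsup₁ := (nondegOn_span_singleton hune).sup_inf_orthogonal hf hule
    have hperp₁ := perp_inf_orthogonal f (Submodule.span K {u}) N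
    generalize N ⊓ f.orthogonal (Submodule.span K {u}) = N₁ at hnd₁ hdim₁ hdisc₁ hsup₁ hperp₁
    obtain ⟨w, hw, hww⟩ : ∃ w ∈ N₁, f w w = 1 := by
      rcases n.eq_zero_or_pos with rfl | hn0
      · exact exists_apply_self_eq_one_of_finrank_eq_one (by omega) (hdisc₁.trans hdisc)
      · exact hnd₁.exists_apply_self_eq_one_of_two_le hf h2 (by omega)
    have hwne : f w w ≠ 0 := hww ▸ one_ne_zero
    have hwle := (Submodule.span_singleton_le_iff_mem w N₁).2 hw
    have hdim₂ := finrank_inf_orthogonal_span_singleton hf hw hwne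
    have hneg₂ := ih (hnd₁.inf_orthogonal hf (nondegOn_span_singleton hwne) hwle)
      (by rw [discSign_inf_orthogonal_span_singleton hf hw hww, hdisc₁, hdisc]) (by omega)
    rw [← hsup₁, ← (nondegOn_span_singleton hwne).sup_inf_orthogonal hf hwle, ← sup_assoc]
    have huw := hperp₁ u (Submodule.mem_span_singleton_self u) w hw
    exact (hasOmegaNegation_span_sup_span hf huu hww huw).sup hf
      ((hperp₁.mono le_rfl inf_le_left).sup_left (perp_inf_orthogonal f _ N₁)) hneg₂

end OmegaNegation

/-! ### Inverting isometries -/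

section Isometry

variable {f : LinearMap.BilinForm K V} {φ : V ≃ₗ[K] V}

theorem apply_left_of_mem_orthGroup (hφ : φ ∈ orthGroup f) (x y : V) :
    f (φ x) y = f x (φ.symm y) := by
  conv_lhs => rw [← φ.apply_symm_apply y]
  exact hφ x (φ.symm y)

theorem symmSkewPair_of_mem_orthGroup (hf : f.IsSymm) (h2 : (2 : K) ≠ 0) (hφ : φ ∈ orthGroup f) :
    SymmSkewPair f (φ + φ.symm : Module.End K V) (φ - φ.symm : Module.End K V) := by
  have hadj := apply_left_of_mem_orthGroup hφ
  have hadj' : ∀ x y, f (φ.symm x) y = f x (φ y) := apply_left_of_mem_orthGroup (inv_mem hφ)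
  refine ⟨hf, h2, fun x y => ?_, fun x y => ?_, ?_, ?_⟩
  · simp only [LinearMap.add_apply, LinearEquiv.coe_coe, map_add, hadj, hadj', add_comm]
  · simp only [LinearMap.sub_apply, Pi.neg_apply, LinearEquiv.coe_coe, map_sub,
      hadj, hadj', neg_sub]
  · ext x
    simp only [Module.End.mul_apply, LinearMap.add_apply, LinearMap.sub_apply,
      LinearEquiv.coe_coe, map_add, map_sub, φ.apply_symm_apply, φ.symm_apply_apply]
    abel
  · ext x
    simp only [pow_two, aeval_mul, aeval_X, aeval_C, Module.End.mul_apply,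
      LinearMap.add_apply, LinearMap.sub_apply, Module.algebraMap_end_apply,
      LinearEquiv.coe_coe, map_add, map_sub, φ.apply_symm_apply, φ.symm_apply_apply]
    module

namespace ReversingSplitting

variable {T D : Module.End K V} {F N : Submodule K V} {σ : V ≃ₗ[K] V}

theorem exists_add_eq (h : ReversingSplitting f T D ⊤ F N) (x : V) : ∃ a ∈ F, ∃ b ∈ N, a + b = x :=
  Submodule.mem_sup.1 (h.sup_eq ▸ Submodule.mem_top)

theorem sq_eq_one (h : ReversingSplitting f T D ⊤ F N) (hfix : ∀ x ∈ F, σ x = x)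
    (hneg : ∀ x ∈ N, σ x = -x) : σ ^ 2 = 1 := by
  ext x
  obtain ⟨a, ha, b, hb, rfl⟩ := h.exists_add_eq x
  rw [pow_two, LinearEquiv.mul_apply, map_add, hfix a ha, hneg b hb, map_add, map_neg,
    hfix a ha, hneg b hb, neg_neg]
  rfl

theorem apply_symm (h : ReversingSplitting f T D ⊤ F N) (hfix : ∀ x ∈ F, σ x = x)
    (hneg : ∀ x ∈ N, σ x = -x) (x : V) : σ (T x) = T (σ x) := by
  obtain ⟨a, ha, b, hb, rfl⟩ := h.exists_add_eq x
  rw [map_add, map_add, map_add, hfix a ha, hneg b hb, hfix _ (h.invt_left a ha),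
    hneg _ (h.invt_right b hb), map_add, map_neg]

theorem apply_skew (h : ReversingSplitting f T D ⊤ F N) (hfix : ∀ x ∈ F, σ x = x)
    (hneg : ∀ x ∈ N, σ x = -x) (x : V) : σ (D x) = -D (σ x) := by
  obtain ⟨a, ha, b, hb, rfl⟩ := h.exists_add_eq x
  rw [map_add, map_add, map_add, hfix a ha, hneg b hb, hneg _ (h.left_le ha),
    hfix _ (h.right_le hb), map_add, map_neg, neg_add, neg_neg]

theorem exists_conj_eq_inv (hf : f.IsSymm) (h2 : (2 : K) ≠ 0)
    (h : ReversingSplitting f (φ + φ.symm : Module.End K V) (φ - φ.symm : Module.End K V) ⊤ F N)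
    (hN : HasOmegaNegation f N) : ∃ σ ∈ omegaGroup f, σ ^ 2 = 1 ∧ σ * φ * σ⁻¹ = φ⁻¹ := by
  obtain ⟨σ, hσ, hneg, horth⟩ := hN
  have hfix : ∀ x ∈ F, σ x = x := fun x hx => horth x fun y hy => h.perp.symm hf y hy x hx
  refine ⟨σ, hσ, h.sq_eq_one hfix hneg, mul_inv_eq_iff_eq_mul.2 (LinearEquiv.ext fun x => ?_)⟩
  have hsymm : σ (φ x + φ.symm x) = φ (σ x) + φ.symm (σ x) := h.apply_symm hfix hneg x
  have hskew : σ (φ x - φ.symm x) = -(φ (σ x) - φ.symm (σ x)) := h.apply_skew hfix hneg x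
  rw [map_add] at hsymm
  rw [map_sub] at hskew
  have htwo : (2 : K) • σ (φ x) = (2 : K) • φ.symm (σ x) := by
    linear_combination (norm := module) hsymm + hskew
  exact smul_right_injective V h2 htwo

end ReversingSplitting

end Isometry

section Counting

theorem card_filter_fst_eq_le_two {A : Finset (ℕ × K)}
    (hA : ∀ p ∈ A, p.2 ^ 2 = 4) (e : ℕ) : (A.filter fun p => p.1 = e).card ≤ 2 := by
  classical
  have hsub : (A.filter fun p => p.1 = e) ⊆ {(e, 2), (e, -2)} := by
    intro p hp
    obtain ⟨hpA, hpe⟩ := Finset.mem_filter.1 hp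
    have hprod : (p.2 - 2) * (p.2 + 2) = 0 := by linear_combination hA p hpA
    rw [Finset.mem_insert, Finset.mem_singleton]
    rcases mul_eq_zero.1 hprod with h | h
    · exact .inl (Prod.ext hpe (sub_eq_zero.1 h))
    · exact .inr (Prod.ext hpe (eq_neg_of_add_eq_zero_left h))
  exact (Finset.card_le_card hsub).trans Finset.card_le_two

theorem even_add_sum_half_of_sum_eq_eight_or_nine {A : Finset (ℕ × K)}
    (hA : ∀ p ∈ A, p.2 ^ 2 = 4) {J : ℕ}
    (hn : ∑ p ∈ A, (2 * p.1 - 1) + 4 * J = 8 ∨ ∑ p ∈ A, (2 * p.1 - 1) + 4 * J = 9) :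
    Even (J + ∑ p ∈ A, p.1 / 2) := by
  classical
  have hmem : ∀ p ∈ A, p.1 ∈ Finset.range 6 := by
    intro p hp
    have hle := Finset.single_le_sum (f := fun p : ℕ × K => 2 * p.1 - 1)
      (fun _ _ => Nat.zero_le _) hp
    rw [Finset.mem_range]
    omega
  have hsum : ∀ g : ℕ → ℕ, ∑ p ∈ A, g p.1 =
      ∑ e ∈ Finset.range 6, (A.filter fun p => p.1 = e).card * g e := fun g => by
    simp only [← Finset.sum_fiberwise_of_maps_to' hmem, Finset.sum_const, smul_eq_mul]
  have hcard := card_filter_fst_eq_le_two hA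
  have h₁ := hcard 1
  have h₂ := hcard 2
  have h₃ := hcard 3
  have h₄ := hcard 4
  have h₅ := hcard 5
  rw [hsum fun e => 2 * e - 1] at hn
  rw [hsum fun e => e / 2, Nat.even_iff]
  simp only [Finset.sum_range_succ, Finset.sum_range_zero] at hn ⊢
  omega

end Counting

section Signs

variable [Fintype K] [DecidableEq K] [FiniteDimensional K V] {f : LinearMap.BilinForm K V}
  {T D : Module.End K V} {W : Submodule K V} {Y : Set (ℕ × K)}

theorem SignPattern.one_one_mem_signs (h : SignPattern f T D W Y)
    (hdim : finrank K W = 8 ∨ finrank K W = 9) : (1, 1) ∈ signs f T D W := by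
  cases h with
  | all h => exact h _
  | half heven h =>
    have hdim8 : finrank K W = 8 := hdim.resolve_right fun h9 => by
      rw [h9] at heven
      exact absurd heven (by decide)
    rw [hdim8] at h
    exact h 1
  | graded A J hA hsum hpos _ =>
    rw [hsum] at hdim
    rwa [(even_add_sum_half_of_sum_eq_eight_or_nine (fun p hp => (hA p hp).2) hdim).neg_one_pow]
      at hpos

theorem SignPattern.exists_one_mem_signs (h : SignPattern f T D W Y) (hdim : 4 ∣ finrank K W) :
    ∃ b, (1, b) ∈ signs f T D W := by
  cases h with
  | all h => exact ⟨1, h _⟩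
  | half _ h =>
    have heven : Even (finrank K W / 2) := by rw [Nat.even_iff]; omega
    rw [heven.neg_one_pow] at h
    exact ⟨1, h 1⟩
  | graded A J _ _ hpos _ => exact ⟨_, hpos⟩

theorem one_one_mem_signs_of_discSign_eq_neg_one (hf : f.IsSymm) (hdim : Even (finrank K W))
    (hdisc : discSign f W = -1) {b : ℤˣ} (hb : (1, b) ∈ signs f T D W) :
    (1, 1) ∈ signs f T D W := by
  rcases Int.units_eq_one_or b with rfl | rfl
  · exact hb
  obtain ⟨F, N, hsplit, hN, hNdisc⟩ := hb
  have hdisj := hsplit.nondeg_left.disjoint_of_perp hf hsplit.perp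
  refine ⟨N, F, hsplit.swap hf, ?_, ?_⟩
  · rw [← hsplit.sup_eq, finrank_sup_of_disjoint hdisj] at hdim
    have hNeven := (neg_one_pow_eq_one_iff_even (by decide)).1 hN.symm
    exact ((Nat.even_add.1 hdim).2 hNeven).neg_one_pow.symm
  · rw [← hsplit.sup_eq, discSign_sup hsplit.perp hdisj, ← hNdisc] at hdisc
    simpa using hdisc.symm

theorem HasDisc.discSign_top {d : K} (h : HasDisc f d) : discSign f ⊤ = quadraticChar K d := by
  obtain ⟨b, c, hdet⟩ := h
  rw [discSign_eq_quadraticChar_det f b.linearIndependent b.span_eq]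
  change quadraticChar K (Matrix.of fun i j => f (b i) (b j)).det = _
  rw [hdet, map_mul, quadraticChar_sq_one' c.ne_zero, mul_one]

end Signs

theorem omegaGroup_le_orthGroup (f : LinearMap.BilinForm K V) : omegaGroup f ≤ orthGroup f :=
  Subgroup.commutator_le.2 fun _ ha _ hb =>
    mul_mem (mul_mem (mul_mem ha hb) (inv_mem ha)) (inv_mem hb)

theorem isBireflectionalIn_of_conj_eq_inv {G : Type*} [Group G] {H : Subgroup G} {g σ : G}
    (hg : g ∈ H) (hσ : σ ∈ H) (hsq : σ ^ 2 = 1) (hconj : σ * g * σ⁻¹ = g⁻¹) :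
    IsBireflectionalIn H g := by
  have hinv : σ⁻¹ = σ := inv_eq_of_mul_eq_one_left (by rw [← pow_two, hsq])
  refine ⟨σ, σ * g, hσ, mul_mem hσ hg, hsq, ?_, by rw [← mul_assoc, ← pow_two, hsq, one_mul]⟩
  rw [hinv] at hconj
  rw [pow_two, ← mul_assoc, hconj, inv_mul_cancel]

theorem stmt5_general [Fintype K] (h3 : Fintype.card K % 4 = 3) [FiniteDimensional K V]
    (f : LinearMap.BilinForm K V) (hsymm : f.IsSymm) (hnd : f.Nondegenerate)
    (h : (finrank K V % 4 = 0 ∧ HasDisc f (-1)) ∨ (finrank K V = 8 ∨ finrank K V = 9)) :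
    ∀ φ ∈ orthGroup f, ∃ σ ∈ omegaGroup f, σ ^ 2 = 1 ∧ σ * φ * σ⁻¹ = φ⁻¹ := by
  classical
  intro φ hφ
  have hsq : ¬IsSquare (-1 : K) := by rw [FiniteField.isSquare_neg_one_iff]; omega
  have h2 : (2 : K) ≠ 0 := fun h => hsq ⟨1, by linear_combination -h⟩
  have hχ : quadraticChar K (-1) = -1 := quadraticChar_neg_one_iff_not_isSquare.2 hsq
  have hpattern := (symmSkewPair_of_mem_orthGroup hsymm h2 hφ).signPattern_of_invt hχ (W := ⊤)
    (fun _ _ => Submodule.mem_top) (fun _ _ => Submodule.mem_top)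
    fun x _ hx => hnd.1 x fun y => hx y Submodule.mem_top
  rw [← finrank_top K V] at h
  have hone : (1, 1) ∈ signs f (φ + φ.symm : Module.End K V) (φ - φ.symm : Module.End K V) ⊤ := by
    rcases h with ⟨hdim, hdisc⟩ | hdim
    · obtain ⟨b, hb⟩ := hpattern.exists_one_mem_signs (Nat.dvd_of_mod_eq_zero hdim)
      exact one_one_mem_signs_of_discSign_eq_neg_one hsymm (Nat.even_iff.2 (by omega))
        (hdisc.discSign_top.trans hχ) hb
    · exact hpattern.one_one_mem_signs hdim
  obtain ⟨F, N, hsplit, hN, hNdisc⟩ := hone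
  exact hsplit.exists_conj_eq_inv hsymm h2 (hsplit.nondeg_right.hasOmegaNegation hsymm h2
    ((neg_one_pow_eq_one_iff_even (by decide)).1 hN.symm) hNdisc.symm)

/-- For `K = GF(q)`, `q ≡ 3 (mod 4)`: if `dim V ≡ 0 (mod 4)` and
`disc V = -1`, or `dim V ∈ {8, 9}`, then `Ω(V)` is bireflectional. -/
theorem stmt5 [Fintype K] {q : ℕ} (hq : Fintype.card K = q) (h3 : q % 4 = 3)
    [FiniteDimensional K V]
    (f : LinearMap.BilinForm K V) (hsymm : f.IsSymm) (hnd : f.Nondegenerate)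
    (h : (Module.finrank K V % 4 = 0 ∧ HasDisc f (-1)) ∨
      (Module.finrank K V = 8 ∨ Module.finrank K V = 9)) :
    ∀ φ ∈ omegaGroup f, IsBireflectionalIn (omegaGroup f) φ := by
  intro φ hφ
  obtain ⟨σ, hσ, hsq, hconj⟩ := stmt5_general (hq ▸ h3) f hsymm hnd h φ
    (omegaGroup_le_orthGroup f hφ)
  exact isBireflectionalIn_of_conj_eq_inv hφ hσ hsq hconj

end Biref
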